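/- arXiv:1909.08285 — 3 statements merged into one kernel-verified Lean document; each statement's English description precedes it below -/
import Mathlib

section
/- For every even integer r ≥ 2, χ_ρ(H(r)) = 5, and for every odd integer r ≥ 3, 6 ≤ χ_ρ(H(r)) ≤ 7. -/
/-- The `H`-graph `H(r)`: a 3-regular graph on vertices `(row, column)` with rows
`0 = u`, `1 = v`, `2 = w` and columns indexed by `ZMod (2r)`.  Edges: `u_i u_{i+1}`,
`w_i w_{i+1}`, `u_i v_i`, `v_i w_i` (indices mod `2r`), and `v_{2i} v_{2i+1}`. -/
def HGraph (r : ℕ) : SimpleGraph (Fin 3 × ZMod (2 * r)) :=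
  SimpleGraph.fromRel fun x y =>
    ((x.1 = 0 ∧ y.1 = 0 ∨ x.1 = 2 ∧ y.1 = 2) ∧ y.2 = x.2 + 1) ∨
    ((x.1 = 0 ∧ y.1 = 1 ∨ x.1 = 1 ∧ y.1 = 2) ∧ x.2 = y.2) ∨
    (x.1 = 1 ∧ y.1 = 1 ∧ ∃ i : ZMod (2 * r), x.2 = 2 * i ∧ y.2 = 2 * i + 1)

/-- A coloring `c : V → {1,…,k}` is an `S`-packing `k`-coloring for the sequence `s`
if vertices of the same color `i` are at distance greater than `s i`. -/
def IsPackingColoring {V : Type*} (G : SimpleGraph V) (k : ℕ) (s : ℕ → ℕ)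
    (c : V → ℕ) : Prop :=
  (∀ v, 1 ≤ c v ∧ c v ≤ k) ∧
  ∀ u v, u ≠ v → c u = c v → s (c u) < G.dist u v

/-- The `S`-packing chromatic number for the sequence `s`: the least `k` such that
`G` admits an `S`-packing `k`-coloring. -/
noncomputable def packingChromaticNumber {V : Type*} (G : SimpleGraph V)
    (s : ℕ → ℕ) : ℕ :=
  sInf {k | ∃ c : V → ℕ, IsPackingColoring G k s c}

namespace HPack

/-- Neighbours in the (universal in the column direction) cover of the `H`-graphs. -/
def nb (x : Fin 3 × ℕ) : List (Fin 3 × ℕ) :=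
  if x.1.val = 1 then [(0, x.2), (2, x.2), (1, if x.2 % 2 = 0 then x.2 + 1 else x.2 - 1)]
  else [(x.1, x.2 - 1), (x.1, x.2 + 1), (1, x.2)]

/-- `near d x y`: `y` is reachable from `x` in at most `d` steps in the cover. -/
def near : ℕ → Fin 3 × ℕ → Fin 3 × ℕ → Bool
  | 0, x, y => (Nat.beq x.1.val y.1.val) && (Nat.beq x.2 y.2)
  | d + 1, x, y => ((Nat.beq x.1.val y.1.val) && (Nat.beq x.2 y.2)) ||
      (nb x).any (fun z => near d z y)

/-- Projection of the cover, shifted by `2 * a` columns. -/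
def proj (r a : ℕ) (x : Fin 3 × ℕ) : Fin 3 × ZMod (2 * r) := (x.1, ((x.2 + 2 * a : ℕ) : ZMod (2 * r)))

theorem eq_of_beq {x y : Fin 3 × ℕ}
    (h : ((Nat.beq x.1.val y.1.val) && (Nat.beq x.2 y.2)) = true) : x = y := by
  simp only [Bool.and_eq_true] at h
  exact Prod.ext (Fin.ext (Nat.eq_of_beq_eq_true h.1)) (Nat.eq_of_beq_eq_true h.2)

theorem beq_self' (x : Fin 3 × ℕ) :
    ((Nat.beq x.1.val x.1.val) && (Nat.beq x.2 x.2)) = true := by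
  simp

theorem cast_succ_ne (r : ℕ) (hr : 2 ≤ r) (z : ZMod (2 * r)) : z ≠ z + 1 := by
  intro h
  have h1 : (1 : ZMod (2 * r)) = 0 := by
    have : z + 0 = z + 1 := by rw [add_zero]; exact h
    exact (add_left_cancel this).symm
  have : Fact (1 < 2 * r) := ⟨by omega⟩
  exact one_ne_zero h1

theorem adj_horiz (r : ℕ) (hr : 2 ≤ r) (i : Fin 3) (hi : i.val ≠ 1) (z : ZMod (2 * r)) :
    (HGraph r).Adj (i, z) (i, z + 1) := by
  rw [HGraph, SimpleGraph.fromRel_adj]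
  refine ⟨fun h => cast_succ_ne r hr z (Prod.ext_iff.1 h).2, Or.inl (Or.inl ⟨?_, rfl⟩)⟩
  fin_cases i <;> simp_all

theorem adj_vert (r : ℕ) (i : Fin 3) (hi : i.val ≠ 1) (z : ZMod (2 * r)) :
    (HGraph r).Adj (i, z) (1, z) := by
  rw [HGraph, SimpleGraph.fromRel_adj]
  fin_cases i <;> simp_all

theorem adj_mid (r : ℕ) (hr : 2 ≤ r) (j : ZMod (2 * r)) :
    (HGraph r).Adj (1, 2 * j) (1, 2 * j + 1) := by
  rw [HGraph, SimpleGraph.fromRel_adj]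
  exact ⟨fun h => cast_succ_ne r hr _ (Prod.ext_iff.1 h).2,
    Or.inl (Or.inr (Or.inr ⟨rfl, rfl, j, rfl, rfl⟩))⟩

theorem adj_proj (r : ℕ) (hr : 2 ≤ r) (a : ℕ) (x z : Fin 3 × ℕ) (hx : 1 ≤ x.2) (hz : z ∈ nb x) :
    (HGraph r).Adj (proj r a x) (proj r a z) := by
  obtain ⟨i, n⟩ := x
  unfold nb at hz
  simp only at hz hx
  split_ifs at hz with h1 h2
  · have hi : i = 1 := Fin.ext h1
    subst hi
    simp only [List.mem_cons, List.not_mem_nil, or_false] at hz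
    rcases hz with rfl | rfl | rfl
    · exact (adj_vert r 0 (by decide) _).symm
    · exact (adj_vert r 2 (by decide) _).symm
    · have := adj_mid r hr (((n / 2 + a : ℕ)) : ZMod (2 * r))
      have e : n = 2 * (n / 2) := by omega
      have e1 : (2 : ZMod (2 * r)) * (((n / 2 + a : ℕ)) : ZMod (2 * r)) = ((n + 2 * a : ℕ)) := by
        rw [show n + 2 * a = 2 * (n / 2 + a) by omega]; push_cast; ring
      rw [e1] at this
      have e2 : ((n + 2 * a : ℕ) : ZMod (2 * r)) + 1 = ((n + 1 + 2 * a : ℕ) : ZMod (2 * r)) := by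
        push_cast; ring
      rw [e2] at this
      exact this
  · have hi : i = 1 := Fin.ext h1
    subst hi
    simp only [List.mem_cons, List.not_mem_nil, or_false] at hz
    rcases hz with rfl | rfl | rfl
    · exact (adj_vert r 0 (by decide) _).symm
    · exact (adj_vert r 2 (by decide) _).symm
    · have := adj_mid r hr (((n / 2 + a : ℕ)) : ZMod (2 * r))
      have e1 : (2 : ZMod (2 * r)) * (((n / 2 + a : ℕ)) : ZMod (2 * r)) = ((n - 1 + 2 * a : ℕ)) := by
        rw [show n - 1 + 2 * a = 2 * (n / 2 + a) by omega]; push_cast; ring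
      rw [e1] at this
      have e2 : ((n - 1 + 2 * a : ℕ) : ZMod (2 * r)) + 1 = ((n + 2 * a : ℕ) : ZMod (2 * r)) := by
        rw [show n + 2 * a = (n - 1 + 2 * a) + 1 by omega]; push_cast; ring
      rw [e2] at this
      exact this.symm
  · simp only [List.mem_cons, List.not_mem_nil, or_false] at hz
    rcases hz with rfl | rfl | rfl
    · have := adj_horiz r hr i h1 ((n - 1 + 2 * a : ℕ) : ZMod (2 * r))
      have e2 : ((n - 1 + 2 * a : ℕ) : ZMod (2 * r)) + 1 = ((n + 2 * a : ℕ) : ZMod (2 * r)) := by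
        rw [show n + 2 * a = (n - 1 + 2 * a) + 1 by omega]; push_cast; ring
      rw [e2] at this
      exact this.symm
    · have := adj_horiz r hr i h1 ((n + 2 * a : ℕ) : ZMod (2 * r))
      have e2 : ((n + 2 * a : ℕ) : ZMod (2 * r)) + 1 = ((n + 1 + 2 * a : ℕ) : ZMod (2 * r)) := by
        push_cast; ring
      rw [e2] at this
      exact this
    · exact adj_vert r i h1 _

theorem nb_col (x z : Fin 3 × ℕ) (hz : z ∈ nb x) : z.2 ≤ x.2 + 1 ∧ x.2 ≤ z.2 + 1 := by
  obtain ⟨i, n⟩ := x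
  unfold nb at hz
  simp only at hz
  split_ifs at hz <;> simp only [List.mem_cons, List.not_mem_nil, or_false] at hz <;>
    rcases hz with rfl | rfl | rfl <;> constructor <;> simp only <;> omega

/-- Nearness in the cover gives a short walk in `H(r)`. -/
theorem walk_of_near (r : ℕ) (hr : 2 ≤ r) (a : ℕ) : ∀ (d : ℕ) (x y : Fin 3 × ℕ), d ≤ x.2 →
    near d x y = true → ∃ p : (HGraph r).Walk (proj r a x) (proj r a y), p.length ≤ d := by
  intro d
  induction d with
  | zero =>
    intro x y _ h
    have := eq_of_beq h
    subst this
    exact ⟨SimpleGraph.Walk.nil, by simp⟩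
  | succ d ih =>
    intro x y hx h
    unfold near at h
    rw [Bool.or_eq_true] at h
    rcases h with h | h
    · have := eq_of_beq h
      subst this
      exact ⟨SimpleGraph.Walk.nil, by simp⟩
    · rw [List.any_eq_true] at h
      obtain ⟨z, hz, h⟩ := h
      have := nb_col x z hz
      obtain ⟨p, hp⟩ := ih z y (by omega) h
      exact ⟨SimpleGraph.Walk.cons (adj_proj r hr a x z (by omega) hz) p, by simpa using hp⟩

theorem dist_le_of_near (r : ℕ) (hr : 2 ≤ r) (a d : ℕ) (x y : Fin 3 × ℕ) (hx : d ≤ x.2)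
    (h : near d x y = true) : (HGraph r).dist (proj r a x) (proj r a y) ≤ d := by
  obtain ⟨p, hp⟩ := walk_of_near r hr a d x y hx h
  exact (SimpleGraph.dist_le p).trans hp

/-- Every neighbour downstairs lifts to a neighbour in the cover. -/
theorem lift_adj (r : ℕ) (hr : 2 ≤ r) (a : ℕ) (x : Fin 3 × ℕ) (hx : 1 ≤ x.2)
    (y : Fin 3 × ZMod (2 * r)) (h : (HGraph r).Adj (proj r a x) y) :
    ∃ z ∈ nb x, proj r a z = y := by
  obtain ⟨i, n⟩ := x
  obtain ⟨j, w⟩ := y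
  have hpred : ∀ w : ZMod (2 * r), ((n + 2 * a : ℕ) : ZMod (2 * r)) = w + 1 →
      ((n - 1 + 2 * a : ℕ) : ZMod (2 * r)) = w := by
    intro w hw
    simp only at hx
    rw [show n + 2 * a = (n - 1 + 2 * a) + 1 by omega, Nat.cast_add, Nat.cast_one] at hw
    exact add_right_cancel hw
  have hsucc : ((n + 1 + 2 * a : ℕ) : ZMod (2 * r)) = ((n + 2 * a : ℕ) : ZMod (2 * r)) + 1 := by
    push_cast; ring
  -- parity is well defined modulo `2 * r`
  have hpar : ∀ (m : ℕ) (k : ZMod (2 * r)), (m : ZMod (2 * r)) = 2 * k → m % 2 = 0 := by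
    intro m k hk
    have : NeZero (2 * r) := ⟨by omega⟩
    have h2 := congrArg (ZMod.castHom (Dvd.intro r rfl : 2 ∣ 2 * r) (ZMod 2)) hk
    simp only [map_mul, map_natCast, map_ofNat] at h2
    have h3 : (2 : ZMod 2) = 0 := by decide
    rw [h3, zero_mul] at h2
    have := (ZMod.natCast_eq_zero_iff m 2).1 h2
    omega
  have hpar1 : ∀ (m : ℕ) (k : ZMod (2 * r)), (m : ZMod (2 * r)) = 2 * k + 1 → m % 2 = 1 := by
    intro m k hk
    have := hpar (m + 1) (k + 1) (by push_cast; rw [hk]; ring)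
    omega
  rw [HGraph, SimpleGraph.fromRel_adj] at h
  obtain ⟨-, h⟩ := h
  simp only [proj] at h
  rcases h with (⟨h1, h2⟩ | ⟨h1, h2⟩ | ⟨h1, h2, k, h3, h4⟩) |
    (⟨h1, h2⟩ | ⟨h1, h2⟩ | ⟨h1, h2, k, h3, h4⟩)
  · have hij : j = i ∧ i.val ≠ 1 := by
      rcases h1 with ⟨rfl, rfl⟩ | ⟨rfl, rfl⟩ <;> decide
    refine ⟨(i, n + 1), ?_, ?_⟩
    · simp [nb, hij.2]
    · simp only [proj]; rw [hsucc, ← h2, hij.1]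
  · rcases h1 with ⟨rfl, rfl⟩ | ⟨rfl, rfl⟩
    · exact ⟨(1, n), by simp [nb], by simp only [proj]; rw [h2]⟩
    · exact ⟨(2, n), by simp [nb], by simp only [proj]; rw [h2]⟩
  · subst h1 h2
    have := hpar _ _ h3
    refine ⟨(1, n + 1), ?_, ?_⟩
    · have : n % 2 = 0 := by omega
      simp [nb, this]
    · simp only [proj]; rw [hsucc, h4, h3]
  · have hij : j = i ∧ i.val ≠ 1 := by
      rcases h1 with ⟨rfl, rfl⟩ | ⟨rfl, rfl⟩ <;> decide
    refine ⟨(i, n - 1), ?_, ?_⟩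
    · simp [nb, hij.2]
    · simp only [proj]; rw [hpred _ h2, hij.1]
  · rcases h1 with ⟨rfl, rfl⟩ | ⟨rfl, rfl⟩
    · exact ⟨(0, n), by simp [nb], by simp only [proj]; rw [h2]⟩
    · exact ⟨(1, n), by simp [nb], by simp only [proj]; rw [h2]⟩
  · subst h1 h2
    have := hpar1 _ _ h4
    refine ⟨(1, n - 1), ?_, ?_⟩
    · have : n % 2 = 1 := by omega
      simp [nb, this]
    · simp only [proj]; rw [hpred (2 * k) h4, h3]

theorem lift_walk (r : ℕ) (hr : 2 ≤ r) (a : ℕ) : ∀ (d : ℕ) (x : Fin 3 × ℕ), d ≤ x.2 →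
    ∀ (y : Fin 3 × ZMod (2 * r)) (p : (HGraph r).Walk (proj r a x) y), p.length ≤ d →
    ∃ z, near d x z = true ∧ proj r a z = y ∧ z.2 ≤ x.2 + d ∧ x.2 ≤ z.2 + d := by
  intro d
  induction d with
  | zero =>
    intro x _ y p hp
    have := SimpleGraph.Walk.eq_of_length_eq_zero (Nat.le_zero.1 hp)
    exact ⟨x, beq_self' x, this, by omega, by omega⟩
  | succ d ih =>
    intro x hx y p hp
    cases p with
    | nil =>
      refine ⟨x, ?_, rfl, by omega, by omega⟩
      unfold near
      rw [beq_self' x, Bool.true_or]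
    | cons h q =>
      obtain ⟨z, hz, rfl⟩ := lift_adj r hr a x (by omega) _ h
      have hc := nb_col x z hz
      obtain ⟨t, ht, ht2, h3, h4⟩ := ih z (by omega) y q (by simpa using hp)
      refine ⟨t, ?_, ht2, by omega, by omega⟩
      unfold near
      rw [Bool.or_eq_true, List.any_eq_true]
      exact Or.inr ⟨z, hz, ht⟩

theorem connected (r : ℕ) (hr : 2 ≤ r) : (HGraph r).Preconnected := by
  have : NeZero (2 * r) := ⟨by omega⟩
  have h0 : ∀ n : ℕ, (HGraph r).Reachable (0, 0) (0, (n : ZMod (2 * r))) := by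
    intro n
    induction n with
    | zero => rw [Nat.cast_zero]
    | succ n ih =>
      rw [Nat.cast_succ]
      exact ih.trans (adj_horiz r hr 0 (by decide) _).reachable
  have h1 : ∀ z : ZMod (2 * r), (HGraph r).Reachable (0, 0) (0, z) := by
    intro z
    have := h0 z.val
    rwa [ZMod.natCast_zmod_val] at this
  have h2 : ∀ x : Fin 3 × ZMod (2 * r), (HGraph r).Reachable (0, 0) x := by
    rintro ⟨i, z⟩
    have hm := (h1 z).trans (adj_vert r 0 (by decide) z).reachable
    by_cases hi : i.val = 1
    · have : i = 1 := Fin.ext hi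
      subst this; exact hm
    · exact hm.trans (adj_vert r i hi z).symm.reachable
  intro x y
  exact (h2 x).symm.trans (h2 y)

/-! ### Lower bounds -/

/-- Vertex number `i` of a window of the cover. -/
def vert (i : ℕ) : Fin 3 × ℕ := (Fin.ofNat 3 i, i / 3 + 6)

/-- Pairs `(offset, distance)` to earlier vertices in column order. -/
def tbl (i : ℕ) : List (ℕ × ℕ) :=
  [[(1, 3), (2, 2), (3, 1), (4, 4), (5, 3), (6, 2), (7, 5), (8, 4), (9, 3), (11, 5), (12, 4), (15, 5)],
   [(1, 1), (2, 2), (3, 3), (4, 2), (5, 3), (6, 4), (7, 3), (8, 4), (9, 5), (10, 4), (11, 5), (13, 5)],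
   [(1, 1), (2, 2), (3, 1), (4, 2), (5, 3), (6, 2), (7, 3), (8, 4), (9, 3), (10, 4), (11, 5), (12, 4), (13, 5), (15, 5)],
   [(1, 3), (2, 2), (3, 1), (4, 4), (5, 3), (6, 2), (7, 5), (8, 4), (9, 3), (11, 5), (12, 4), (15, 5)],
   [(1, 1), (2, 2), (3, 1), (4, 2), (5, 3), (6, 4), (7, 3), (8, 4), (9, 5), (10, 4), (11, 5), (13, 5)],
   [(1, 1), (2, 2), (3, 1), (4, 2), (5, 3), (6, 2), (7, 3), (8, 4), (9, 3), (10, 4), (11, 5), (12, 4), (13, 5), (15, 5)]].getD (i % 6) []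

theorem tbl_ok : ∀ i < 24, ∀ p ∈ tbl i, p.1 ≤ i →
    1 ≤ p.1 ∧ p.2 ≤ 5 ∧ i / 3 ≤ (i - p.1) / 3 + 5 ∧
    near p.2 (vert i) (vert (i - p.1)) = true := by
  decide +kernel

/-- All colorings of the first `n` vertices (last vertex first) respecting `tbl`. -/
def enum (k : ℕ) : ℕ → List (List ℕ)
  | 0 => [[]]
  | n + 1 => (enum k n).flatMap fun s =>
      ((List.range' 1 k).filter fun c =>
        (tbl n).all fun p => !(Nat.ble p.2 c && Nat.beq (s.getD (p.1 - 1) 0) c)).map (fun c => c :: s)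

/-- The list of the first `n` values of `f`, last value first. -/
def pre (f : ℕ → ℕ) : ℕ → List ℕ
  | 0 => []
  | n + 1 => f n :: pre f n

theorem pre_getD (f : ℕ → ℕ) : ∀ n j, (pre f n).getD j 0 = if j < n then f (n - 1 - j) else 0 := by
  intro n
  induction n with
  | zero => intro j; simp [pre]
  | succ n ih =>
    intro j
    cases j with
    | zero => simp [pre]
    | succ j =>
      simp only [pre, List.getD_cons_succ, ih]
      by_cases h : j < n
      · rw [if_pos h, if_pos (by omega)]; congr 1; omega
      · rw [if_neg h, if_neg (by omega)]

theorem enum_mem (k N : ℕ) (f : ℕ → ℕ) (h1 : ∀ i < N, 1 ≤ f i ∧ f i ≤ k)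
    (h2 : ∀ i < N, ∀ p ∈ tbl i, 1 ≤ p.1 → p.1 ≤ i → f i = f (i - p.1) → f i < p.2)
    (h3 : ∀ i < N, ∀ p ∈ tbl i, 1 ≤ p.1) :
    ∀ n ≤ N, pre f n ∈ enum k n := by
  intro n
  induction n with
  | zero => intro _; simp [pre, enum]
  | succ n ih =>
    intro hn
    unfold enum pre
    rw [List.mem_flatMap]
    refine ⟨pre f n, ih (by omega), ?_⟩
    rw [List.mem_map]
    refine ⟨f n, ?_, rfl⟩
    rw [List.mem_filter]
    have hf := h1 n (by omega)
    refine ⟨?_, ?_⟩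
    · rw [List.mem_range'_1]; omega
    · rw [List.all_eq_true]
      intro p hp
      rw [Bool.not_eq_true', Bool.eq_false_iff]
      intro hc
      simp only [Bool.and_eq_true, Nat.ble_eq] at hc
      obtain ⟨hc1, hc2⟩ := hc
      replace hc2 := Nat.eq_of_beq_eq_true hc2
      have hp1 := h3 n (by omega) p hp
      rw [pre_getD] at hc2
      split_ifs at hc2 with hlt
      · have := h2 n (by omega) p hp hp1 (by omega)
          (by rw [← hc2]; congr 1; omega)
        omega
      · omega

theorem tbl_pos : ∀ i < 24, ∀ p ∈ tbl i, 1 ≤ p.1 := by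
  decide +kernel

theorem enum4 : enum 4 12 = [] := by decide +kernel

theorem enum5 : ∀ s ∈ enum 5 24, s.getD 19 0 = s.getD 7 0 ∧ s.getD 16 0 = s.getD 4 0 ∧
    ¬ (s.getD 16 0 = s.getD 10 0 ∧ s.getD 13 0 = s.getD 7 0) := by decide +kernel

theorem proj_inj (r a : ℕ) (x y : Fin 3 × ℕ) (h : proj r a x = proj r a y) (hxy : y.2 ≤ x.2)
    (hlt : x.2 < y.2 + 2 * r) : x = y := by
  simp only [proj, Prod.mk.injEq] at h
  obtain ⟨h1, h2⟩ := h
  rw [ZMod.natCast_eq_natCast_iff] at h2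
  have h3 := (Nat.modEq_iff_dvd' (by omega)).1 h2.symm
  have h4 : x.2 + 2 * a - (y.2 + 2 * a) = 0 := Nat.eq_zero_of_dvd_of_lt h3 (by omega)
  exact Prod.ext h1 (by omega)

theorem window (r : ℕ) (hr : 2 ≤ r) (k : ℕ) (c : Fin 3 × ZMod (2 * r) → ℕ)
    (hc : IsPackingColoring (HGraph r) k (fun i => i) c) (N : ℕ) (hN : N ≤ 24)
    (hN2 : N ≤ 12 ∨ 3 ≤ r) (a : ℕ) :
    pre (fun i => c (proj r a (vert i))) N ∈ enum k N := by
  refine enum_mem k N _ (fun i _ => hc.1 _) ?_ (fun i hi => tbl_pos i (by omega)) N le_rfl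
  intro i hi p hp hp1 hpi heq
  obtain ⟨-, h5, hcol, hnear⟩ := tbl_ok i (by omega) p hp hpi
  have hd := dist_le_of_near r hr a p.2 _ _ (by simp only [vert]; omega) hnear
  refine lt_of_lt_of_le (hc.2 _ _ ?_ heq) hd
  intro h
  have h6 := proj_inj r a _ _ h (by simp only [vert]; omega) (by simp only [vert]; omega)
  simp only [vert, Prod.mk.injEq] at h6
  have h7 := congrArg Fin.val h6.1
  simp only [Fin.ofNat] at h7
  omega

theorem not4 (r : ℕ) (hr : 2 ≤ r) (c : Fin 3 × ZMod (2 * r) → ℕ) :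
    ¬ IsPackingColoring (HGraph r) 4 (fun i => i) c := by
  intro hc
  have := window r hr 4 c hc 12 (by omega) (Or.inl le_rfl) 0
  rw [enum4] at this
  exact List.not_mem_nil this

theorem not5 (r : ℕ) (hr : 3 ≤ r) (ho : Odd r) (c : Fin 3 × ZMod (2 * r) → ℕ) :
    ¬ IsPackingColoring (HGraph r) 5 (fun i => i) c := by
  intro hc
  obtain ⟨v, hv⟩ : ∃ v : ℕ → ℕ, ∀ n, v n = c (1, (n : ZMod (2 * r))) := ⟨_, fun _ => rfl⟩
  have key : ∀ a, v (7 + 2 * a) = v (11 + 2 * a) ∧ v (8 + 2 * a) = v (12 + 2 * a) ∧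
      ¬ (v (8 + 2 * a) = v (10 + 2 * a) ∧ v (9 + 2 * a) = v (11 + 2 * a)) := by
    intro a
    have := enum5 _ (window r (by omega) 5 c hc 24 le_rfl (Or.inr hr) a)
    simp only [pre_getD] at this
    simp only [hv]
    exact this
  have per4 : ∀ n, 7 ≤ n → v (n + 4) = v n := by
    intro n hn
    rcases Nat.even_or_odd' n with ⟨m, rfl | rfl⟩
    · have := (key (m - 4)).2.1
      rw [show 8 + 2 * (m - 4) = 2 * m by omega, show 12 + 2 * (m - 4) = 2 * m + 4 by omega] at this
      exact this.symm
    · have := (key (m - 3)).1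
      rw [show 7 + 2 * (m - 3) = 2 * m + 1 by omega,
        show 11 + 2 * (m - 3) = 2 * m + 1 + 4 by omega] at this
      exact this.symm
  have per4m : ∀ m n, 7 ≤ n → v (n + 4 * m) = v n := by
    intro m
    induction m with
    | zero => intro n _; rfl
    | succ m ih =>
      intro n hn
      rw [show n + 4 * (m + 1) = (n + 4 * m) + 4 by ring, per4 _ (by omega), ih n hn]
  have per2 : ∀ n, 7 ≤ n → v n = v (n + 2) := by
    intro n hn
    obtain ⟨m, hm⟩ := ho
    rw [← per4m m (n + 2) (by omega), show n + 2 + 4 * m = n + 2 * r by omega, hv, hv]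
    congr 2
    rw [Nat.cast_add, ZMod.natCast_self, add_zero]
  exact (key 0).2.2 ⟨per2 8 (by omega), per2 9 (by omega)⟩

/-! ### Upper bounds -/

/-- Colors of the ten column types: types 0-5 form the block `B`, types 6-9 the block `A`. -/
def col (l : ℕ) (i : Fin 3) : ℕ :=
  (([[1, 4, 1], [2, 1, 3], [6, 1, 2], [1, 4, 1], [2, 5, 7], [3, 1, 2],
    [1, 4, 1], [2, 1, 3], [1, 5, 1], [3, 1, 2]] : List (List ℕ)).getD l []).getD i.val 0

/-- Possible column types following a given one. -/
def next (l : ℕ) : List ℕ := if l = 5 ∨ l = 9 then [0, 6] else [l + 1]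

/-- Words of `n + 1` column types starting at `l`. -/
def paths : ℕ → ℕ → List (List ℕ)
  | 0, l => [[l]]
  | n + 1, l => (next l).flatMap fun m => (paths n m).map fun w => l :: w

/-- The word of column types `f m, …, f (m + n)`. -/
def word (f : ℕ → ℕ) : ℕ → ℕ → List ℕ
  | 0, m => [f m]
  | n + 1, m => f m :: word f n (m + 1)

theorem word_getD (f : ℕ → ℕ) : ∀ n m j, j ≤ n → (word f n m).getD j 0 = f (m + j) := by
  intro n
  induction n with
  | zero => intro m j hj; obtain rfl : j = 0 := by omega
            simp [word]
  | succ n ih =>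
    intro m j hj
    cases j with
    | zero => simp [word]
    | succ j =>
      simp only [word, List.getD_cons_succ]
      rw [ih (m + 1) j (by omega)]; congr 1; omega

theorem word_mem (f : ℕ → ℕ) (hf : ∀ n, f (n + 1) ∈ next (f n)) :
    ∀ n m, word f n m ∈ paths n (f m) := by
  intro n
  induction n with
  | zero => intro m; simp [word, paths]
  | succ n ih =>
    intro m
    simp only [word, paths, List.mem_flatMap, List.mem_map]
    exact ⟨f (m + 1), hf m, _, ih (m + 1), rfl⟩

set_option synthInstance.maxSize 100000 in
set_option synthInstance.maxHeartbeats 400000 in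
theorem paths_ok : ∀ l < 10, ∀ w ∈ paths 10 l, ∀ i : Fin 3, ∀ j < 11, ∀ i' : Fin 3,
    col (w.getD 5 0) i = col (w.getD j 0) i' → col (w.getD 5 0) i ≤ 5 →
    near (col (w.getD 5 0) i) (i, 11 + l % 2) (i', j + 6 + l % 2) = true →
    j = 5 ∧ i = i' := by
  decide +kernel

theorem col_bound : ∀ l < 10, ∀ i : Fin 3, 1 ≤ col l i ∧ col l i ≤ 7 ∧ (6 ≤ l → col l i ≤ 5) := by
  decide +kernel

theorem col_big : ∀ l < 10, ∀ i : Fin 3, ∀ l' < 10, ∀ i' : Fin 3, 6 ≤ col l i →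
    col l i = col l' i' → l = l' ∧ i = i' := by
  decide +kernel

theorem coloring_of_word (r : ℕ) (hr : 2 ≤ r) (f : ℕ → ℕ) (hlt : ∀ n, f n < 10)
    (hf : ∀ n, f (n + 1) ∈ next (f n)) (hpar : ∀ n, f n % 2 = n % 2)
    (hper : ∀ n, f (n % (2 * r)) = f n)
    (hinj : ∀ n < 2 * r, ∀ m < 2 * r, f n < 6 → f n = f m → n = m) :
    ∀ u v : Fin 3 × ZMod (2 * r), u ≠ v → col (f u.2.val) u.1 = col (f v.2.val) v.1 →
      col (f u.2.val) u.1 < (HGraph r).dist u v := by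
  have : NeZero (2 * r) := ⟨by omega⟩
  rintro ⟨i, z⟩ ⟨i', z'⟩ hne heq
  simp only at heq ⊢
  by_contra hd
  rw [not_lt] at hd
  by_cases hbig : 6 ≤ col (f z.val) i
  · obtain ⟨h1, h2⟩ := col_big _ (hlt _) i _ (hlt _) i' hbig heq
    have h3 : f z.val < 6 := by
      by_contra h
      have := (col_bound _ (hlt z.val) i).2.2 (by omega)
      omega
    have h4 := hinj _ (ZMod.val_lt z) _ (ZMod.val_lt z') h3 h1
    exact hne (Prod.ext h2 (ZMod.val_injective _ h4))
  · obtain ⟨p, hp⟩ := (connected r hr (i, z) (i', z')).exists_walk_length_eq_dist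
    obtain ⟨m, hm⟩ : ∃ m, m + 5 = z.val + 2 * r * 6 := ⟨z.val + 2 * r * 6 - 5, by omega⟩
    have hm6 : 6 ≤ m := by omega
    obtain ⟨a, ha⟩ : ∃ a, 6 + m % 2 + 2 * a = m := ⟨m / 2 - 3, by omega⟩
    have hval : ∀ n : ℕ, f ((n : ZMod (2 * r)).val) = f n := by
      intro n; rw [ZMod.val_natCast, hper]
    have hz : ((m + 5 : ℕ) : ZMod (2 * r)) = z := by
      rw [hm, Nat.cast_add, Nat.cast_mul, ZMod.natCast_self, zero_mul, add_zero,
        ZMod.natCast_zmod_val]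
    have hx : proj r a (i, 11 + m % 2) = (i, z) := by
      simp only [proj]
      rw [← hz]; congr 2; omega
    have hp' : ∃ q : (HGraph r).Walk (proj r a (i, 11 + m % 2)) (i', z'),
        q.length ≤ col (f z.val) i := by
      rw [hx]; exact ⟨p, by omega⟩
    obtain ⟨q, hq⟩ := hp'
    obtain ⟨t, ht, ht2, ht3, ht4⟩ := lift_walk r hr a _ (i, 11 + m % 2)
      (by simp only; omega) _ q hq
    obtain ⟨i'', n⟩ := t
    simp only at ht3 ht4
    simp only [proj, Prod.mk.injEq] at ht2
    obtain ⟨rfl, hz'⟩ := ht2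
    obtain ⟨j, hj⟩ : ∃ j, n = j + 6 + m % 2 := ⟨n - 6 - m % 2, by omega⟩
    have hz'2 : ((m + j : ℕ) : ZMod (2 * r)) = z' := by
      rw [← hz']; congr 1; omega
    have hfz : f (m + 5) = f z.val := by rw [← hz, hval]
    have hfz' : f (m + j) = f z'.val := by rw [← hz'2, hval]
    have hk := paths_ok (f m) (hlt m) _ (word_mem f hf 10 m) i j (by omega) i''
    rw [word_getD f 10 m 5 (by omega), word_getD f 10 m j (by omega), hfz, hfz', hpar, ← hj] at hk
    obtain ⟨h5, hi⟩ := hk heq (by omega) ht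
    apply hne
    rw [hi, ← hz, ← hz'2, h5]

theorem next_of {x y : ℕ} (h : (y = x + 1 ∧ x ≠ 5 ∧ x ≠ 9) ∨ ((x = 5 ∨ x = 9) ∧ (y = 0 ∨ y = 6))) :
    y ∈ next x := by
  unfold next
  split_ifs with h1 <;> simp only [List.mem_cons, List.not_mem_nil, or_false] <;> omega

theorem mod_succ_cases (n q : ℕ) (hq : 0 < q) :
    (n % q + 1 < q ∧ (n + 1) % q = n % q + 1) ∨ (n % q + 1 = q ∧ (n + 1) % q = 0) := by
  have h := Nat.mod_lt n hq
  rw [Nat.add_mod_eq_add_mod_right 1 (Nat.mod_mod n q).symm]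
  rcases Nat.lt_or_ge (n % q + 1) q with h1 | h1
  · exact Or.inl ⟨h1, Nat.mod_eq_of_lt h1⟩
  · have h2 : n % q + 1 = q := by omega
    exact Or.inr ⟨h2, by rw [h2, Nat.mod_self]⟩

theorem mod_par (n r : ℕ) : n % (2 * r) % 2 = n % 2 := Nat.mod_mul_right_mod n 2 r

theorem even5 (r : ℕ) (hr : 2 ≤ r) (he : Even r) :
    ∃ c, IsPackingColoring (HGraph r) 5 (fun i => i) c := by
  obtain ⟨k, hk⟩ := he
  have hlt : ∀ n, 6 + n % (2 * r) % 4 < 10 := fun n => by omega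
  refine ⟨fun x => col (6 + x.2.val % (2 * r) % 4) x.1, fun x => ?_, ?_⟩
  · have := col_bound _ (hlt x.2.val) x.1
    exact ⟨this.1, this.2.2 (by omega)⟩
  · refine coloring_of_word r hr (fun n => 6 + n % (2 * r) % 4) hlt ?_ ?_ ?_ ?_
    · intro n
      apply next_of
      have := mod_succ_cases n (2 * r) (by omega)
      omega
    · intro n
      have := mod_par n r
      omega
    · intro n
      simp only [Nat.mod_mod]
    · intro n _ m _ h
      omega

/-- Column type of column `p` in the cyclic word `B A A … A`. -/
def lab (p : ℕ) : ℕ := if p < 6 then p else 6 + (p - 6) % 4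

theorem odd7 (r : ℕ) (hr : 3 ≤ r) (ho : Odd r) :
    ∃ c, IsPackingColoring (HGraph r) 7 (fun i => i) c := by
  obtain ⟨k, hk⟩ := ho
  have hlt : ∀ n, lab (n % (2 * r)) < 10 := fun n => by unfold lab; split_ifs <;> omega
  refine ⟨fun x => col (lab (x.2.val % (2 * r))) x.1, fun x => ?_, ?_⟩
  · have := col_bound _ (hlt x.2.val) x.1
    exact ⟨this.1, this.2.1⟩
  · refine coloring_of_word r (by omega) (fun n => lab (n % (2 * r))) hlt ?_ ?_ ?_ ?_
    · intro n
      apply next_of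
      have := mod_succ_cases n (2 * r) (by omega)
      simp only [lab]
      split_ifs <;> omega
    · intro n
      have := mod_par n r
      simp only [lab]
      split_ifs <;> omega
    · intro n
      simp only [Nat.mod_mod]
    · intro n hn m hm h h2
      simp only [Nat.mod_eq_of_lt hn, Nat.mod_eq_of_lt hm, lab] at h h2
      split_ifs at h h2 <;> omega

theorem mono {V : Type*} {G : SimpleGraph V} {k l : ℕ} (hkl : k ≤ l) {c : V → ℕ}
    (h : IsPackingColoring G k (fun i => i) c) : IsPackingColoring G l (fun i => i) c :=
  ⟨fun v => ⟨(h.1 v).1, (h.1 v).2.trans hkl⟩, h.2⟩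

end HPack

/-- `χ_ρ(H(r)) = 5` for even `r ≥ 2`, and `6 ≤ χ_ρ(H(r)) ≤ 7` for odd `r ≥ 3`. -/
theorem packing_chromatic_H_graph_bounds :
    (∀ r : ℕ, 2 ≤ r → Even r →
      packingChromaticNumber (HGraph r) (fun i => i) = 5) ∧
    (∀ r : ℕ, 3 ≤ r → Odd r →
      6 ≤ packingChromaticNumber (HGraph r) (fun i => i) ∧
      packingChromaticNumber (HGraph r) (fun i => i) ≤ 7) := by
  refine ⟨fun r hr he => le_antisymm (Nat.sInf_le (HPack.even5 r hr he)) ?_,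
    fun r hr ho => ⟨?_, Nat.sInf_le (HPack.odd7 r hr ho)⟩⟩
  · refine le_csInf ⟨5, HPack.even5 r hr he⟩ ?_
    rintro k ⟨c, hc⟩
    by_contra h
    exact HPack.not4 r hr c (HPack.mono (by omega) hc)
  · refine le_csInf ⟨7, HPack.odd7 r hr ho⟩ ?_
    rintro k ⟨c, hc⟩
    by_contra h
    exact HPack.not5 r hr ho c (HPack.mono (by omega) hc)
end

section
/- Let r ≥ 4 be an integer. The H-graph H(r) admits a packing 6-coloring if and only if the digraph D contains a closed directed walk of length r − 2. -/
/-- `H_P(r)`: the graph obtained from `H(r)` by removing the edges `u_0 u_{2r-1}` and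
`w_0 w_{2r-1}` (so the two horizontal rows become paths); columns indexed by `Fin (2r)`. -/
def HPGraph (r : ℕ) : SimpleGraph (Fin 3 × Fin (2 * r)) :=
  SimpleGraph.fromRel fun x y =>
    ((x.1 = 0 ∧ y.1 = 0 ∨ x.1 = 2 ∧ y.1 = 2) ∧ (y.2 : ℕ) = (x.2 : ℕ) + 1) ∨
    ((x.1 = 0 ∧ y.1 = 1 ∨ x.1 = 1 ∧ y.1 = 2) ∧ x.2 = y.2) ∨
    (x.1 = 1 ∧ y.1 = 1 ∧ (y.2 : ℕ) = (x.2 : ℕ) + 1 ∧ Even (x.2 : ℕ))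

/-- Given 6-colorings `f`, `g` of `H_P(3)`, the coloring `f_g` of `H_P(4)` whose
restriction to columns `0,1,2` is `f` and whose restriction to column `3` is `g`
on column `2` (column `i` consists of the vertex indices `2i` and `2i+1`). -/
def glueColoring (f g : Fin 3 × Fin (2 * 3) → ℕ) : Fin 3 × Fin (2 * 4) → ℕ :=
  fun x =>
    if h : (x.2 : ℕ) < 2 * 3 then f (x.1, ⟨(x.2 : ℕ), h⟩)
    else g (x.1, ⟨(x.2 : ℕ) - 2, by have := x.2.isLt; omega⟩)

/-- The arc relation of the digraph `D` on packing 6-colorings of `H_P(3)`: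
there is an arc from `f` to `g` iff (i) `f` on columns `1,2` agrees with `g` on
columns `0,1` (a shift by one column, i.e. two indices), and (ii) the glued
coloring `f_g` is a packing 6-coloring of `H_P(4)`. -/
def DArc (f g : Fin 3 × Fin (2 * 3) → ℕ) : Prop :=
  (∀ a : Fin 3, ∀ t : Fin (2 * 3), 2 ≤ (t : ℕ) →
    f (a, t) = g (a, ⟨(t : ℕ) - 2, by have := t.isLt; omega⟩)) ∧
  IsPackingColoring (HPGraph 4) 6 (fun i => i) (glueColoring f g)

section Search

/-- A bit offset `6 * p` (for a position `p`) together with six bit masks, one per color. -/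
abbrev SItem : Type := ℕ × ℕ × ℕ × ℕ × ℕ × ℕ × ℕ

/-- Bit `s` of `f` is not set. -/
def bitFree (f s : ℕ) : Bool := Nat.beq (Nat.land (Nat.shiftRight f s) 1) 0

/-- Backtracking search.  The state `f` is a bit set of forbidden pairs (position, color),
`acc` is the list of chosen colors, and `k` is the test applied at the end. -/
noncomputable def search (k : ℕ → List ℕ → Bool) (l : List SItem) : ℕ → List ℕ → Bool :=
  List.rec (motive := fun _ => ℕ → List ℕ → Bool) k
    (fun it _ ih f acc =>
      and (cond (bitFree f it.1) (ih (Nat.lor f it.2.1) (1 :: acc)) true)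
      (and (cond (bitFree f (Nat.add it.1 1)) (ih (Nat.lor f it.2.2.1) (2 :: acc)) true)
      (and (cond (bitFree f (Nat.add it.1 2)) (ih (Nat.lor f it.2.2.2.1) (3 :: acc)) true)
      (and (cond (bitFree f (Nat.add it.1 3)) (ih (Nat.lor f it.2.2.2.2.1) (4 :: acc)) true)
      (and (cond (bitFree f (Nat.add it.1 4)) (ih (Nat.lor f it.2.2.2.2.2.1) (5 :: acc)) true)
      (cond (bitFree f (Nat.add it.1 5)) (ih (Nat.lor f it.2.2.2.2.2.2) (6 :: acc)) true)))))) l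

/-- The first position searched. -/
def item0 : SItem :=
  (132, 348534235087958655341671955783973907464192,
    182733003227889206967731507469253422560420298752,
    95804726505312574696361695211740409621256403276529664,
    50229268450028737100391751367049474766452617473086021697536,
    26334602697128666539726066511737062631004836477094525883232813056,
    13806916178872194322779945631057543111536937088434514590224430235910144)

/-- The remaining positions of the two middle columns. -/
def items1 : List SItem :=
  (114, 5445847423249353989713624309124592304128,
    707960123494184831066054537914749789667328,
    365466028233766840730139523360215795979524243456,
    191609453010668705369536405056188487115679235355705344,
    100458536900057474287895456358860254787463518055322745831424,
    52669205394257333079452307247381374784610508302438791619203301376) ::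
  (126, 22306189716725876710609558993150425817939968,
    11694912903310397709604333784477944473153590788096,
    6131502496341398236859689741511047781385295478701162496,
    3214673180801839177211984672573652400855784629121832278032384,
    1685414572616234658542473830576342173356341064610407620365867024384,
    883642635447820436657916520398830409478693917722869085913830460737191936) ::
  (108, 85091360918906695215643154118158057472,
    44612552273980704153458914888297822849859584,
    23389825806966393420637854543728057027379209437184,
    12263004992682797154281557741446122744963778034674958336,
    6429346361603678354425330469422692006516803987924223405326336,
    3370829145232469317084947663874932897486472769633747428565332262944) ::
  (120, 348449164501299023126719029738102778232832,
    182688412453728258039140015863792201111850450944,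
    95781342389934072210119217601502770842202304260603904,
    50217008438933757638481500350228204060842490889356523339776,
    26328174920431701924769764020652429373877793403109476384391561216,
    13803546172683296138733690050010150955541087001189387945721858340552704) ::
  (138, 91343857779028531118530633331665214697067511808,
    47890671194270140475412320318597942768264924612263936,
    25108504219466877425449492178928342359658280848091749810176,
    13164087460215850962382094427810222325325493931699476454382239744,
    6901773086341648069366845019429910445785820273864730577309941423407104,
    3618516807891889982992204444469861012089362710839790913643310832825848037376) ::
  (144, 5847433797101388224426032232700425225618054971392,
    3065751248125400897186518475598186275970374903554637824,
    1607336590400919499403346507598672109603466897968637541351424,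
    842707286308117329271058510007147534969938805816513600692521271296,
    441821317723910218328958259842604642692324672041230695233189845240119296,
    231641615026833440547252868323430998862382738367543793657795172299490442870784) ::
  (156, 23945244253625655261536094344096046041548065815396352,
    12554252109550751704786487297598539109044040397557317238784,
    6582043730107925115817031677752991379530260374642163662238777344,
    3450886543170824034682691761683882921250126281231427555657577855451136,
    1809258403945944991496102220773434443900078069871995932458337284497631870976,
    948572470088011607701508441891107245153153898470386149266112074960299107909894144) ::
  (150, 374235785309789527023154189013131493369008732766208,
    48650649236474321529727824897539878122304839675281408,
    25114634225008659581203040229586477939754638580522592239616,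
    13167301348564333258445095270363817513176954954864662071878877184,
    6903458089436097161389949979652800546342131853451467393134182545752064,
    3619400234794272508550826067507948581430738836110577392739793039762428788736) ::
  (162, 1532869685307346314703937793609020270344419402420584448,
    803668295188585092792062699267210943127977958717426977734656,
    421353643154058641251590866887946301499891226501090519640027693056,
    220910658861955109164432362047313683407159638311964141339940296142618624,
    115820807513416720273626434068179751453936758827576379371209318790625832730624,
    60723459529594225438819055913777495765780460566621400244629057647277622655918800896) ::
  (174, 6277102109622443772880117915738713893515576165111261298688,
    3291021865006072254899548926141671436201240925977265370243792896,
    1725443271585411921560739952132880172195580575650195351073922048065536,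
    904629201972972495747859549174859804508193103867131345150300089339382595584,
    474286235044005803850754220562431198861742065548524501718358369107347209185132544,
    248662581598751714889304228991102417673428375560620906713215683778392649343931290484736) ::
  (168, 23951090259826529729481868096840415575616558897037312,
    12557316364218345264604514430227570806929180274470233833472,
    6583650674280670057254889777944717673039039976052514420061896704,
    3451729044718048577701831054554252578174259679688041974170616380522496,
    1809700117397136254275407047466103746420311812591181468305767149273629065216,
    948804055149909772481547748640803672930579601453371200042380306615482132394409984) ::
  []

/-- The positions outside the two middle columns. -/
def items2 : List SItem :=
  (180, 401832590785208992321749068967843009749167479828141689536512,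
    210676821573916450564882484236703745475340654010021177651273662464,
    110455329430977548452257036209473795260387485679901873180515419568472064,
    57910403756708360136800957116530998223086456225651527867417308992010616569856,
    30361729764797112719409527932368912765140797706096182393886295665049818295336697856,
    3947009812776084461550652763020966810156229261273387633192427306841209112110125023232) ::
  (192, 1645504655424865900397885630903409414901747198226926481883267072,
    862721635780151805188387353694482316971538101299384253217188844929024,
    452314600986486222765618614011921739860038274423244810111922221368091869184,
    237143117522002901925326893658894448592995773020145279343080266619783111136772096,
    124331290799375857444652114395117964194412512031152406978457336311276426804627385614336,
    252547919614787351505775543451024936219485653446949072717829062761077188749614961917952) ::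
  (186, 25717287342374771955324087625228836457080533874708271582937088,
    3343247158397193301023515195458373238258002792765710511309324288,
    1725864522358631971489025825949540069681146095482310340132705849573376,
    904850058698568126353068799965069987852913129472142075276982060455689191424,
    474402027574954886240772305050954300501606219799902674827547023579186217671983104,
    248723290233217947397402853019694838036713859043392539863909743097408948114400210845696) ::
  (210, 431359172391696046593903330827543357660003617531999415666807163322368,
    226157300489952114819304614446886372500186884027025785675366752565074067456,
    118571558761001444380670325951541212573869873410407087501979738798317074955370496,
    62165645399687928722312893211317226331962283922592964108112433412776423885837984333824,
    126273959807393675752861443753028956579255239436564782472780313146832058854075550138368,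
    252608628017669405539189120690646148124343054089572868017224422426325270621626059194368) ::
  (204, 1645906389911985405140741608014645533253154167981329381307973632,
    862932209757494680235405693628599847252562551471007328643759202107392,
    452425029349181219534019186117716232026494362054114761803748042230563078144,
    237201013787477442914698867498043306895714059412345212181409185256096187396653056,
    124361645116608973698701015135277364150693060883225686789992486949142191845404338814976,
    252608628017669405539240954084201766114670935618822770166467926388598170153206048358400) ::
  (198, 105338002678797826083192587935506237947685759832068375061859401728,
    55227664714672754016880553947746466653887700404802991594215482972962816,
    28955201878354178461468468500096298584739017046072196643033034147357540745216,
    15180864882398556359701550102355901998192775980817194121276243048401631070088331264,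
    1973504906388042230775319953782826297770861109314158415505460528267615012209314234368,
    252608628017669405539241763980976072645769808767675439430591986810167698927192981372928) ::
  (90, 324597781825663357603619209740288,
    170183381172106567968211803010169307136,
    89225104549279760057975214171325901135937536,
    46779651613932789437414389577660075168471443308544,
    24526009985365594308568307759943740869586196853348630544,
    12858692723207356708850660949229938116022006109747876848470048) ::
  (102, 1329228075032421200281978720619593728,
    696900987448609382778701842742127232024576,
    365376824912773407783963079839716990822610108416,
    191562684779868155054021836663163009875650371129442304,
    100434016877867515276984268267259328361045049297750382936064,
    52656349840863403849539528083839992353596065525777389319312508928) ::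
  (96, 5071840643183657889919005622272,
    2659115172397130037537594143494111232,
    1394142258582179415627058118286956008833024,
    730932056467699834325929279541734646284787122176,
    383218906021337411071378541408005732679227897855082496,
    200917073800114948575791577329183100832407029351954618908704) ::
  (84, 5070602703218159485938944704512,
    2658466291231572657694632883995541504,
    1393801974917501097808697051390521968164864,
    730753649825546856132590624478008307936288342016,
    383125369559736310108124802655255616611652562323571712,
    200868033755735030553968536696777314581283819296941334988832) ::
  (78, 79247510049744654529984462848,
    10302175702151505262970088194048,
    5318230661705701506145698998592208896,
    2788284517164992654136387937704981408251904,
    1461864112935399669919504323608420305935775367184,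
    766437812042674822142759618107540515260341756255930400) ::
  (72, 1238242270758298330702282752,
    649198078812052032349440776863744,
    340366762349242248756314140973380665344,
    178450209098559530019433553991928387330899976,
    93559303227865578874848586120390857199044024861712,
    49052019970731188617136615559501411880577110709182269472) ::
  (228, 113078218887448768438312194756455525950423988314308454820559497021978836992,
    59285779379638007187191788849564581232688990526380647560083341984418776339185664,
    31082822699843962635726441926240819628964544095297755546118976647546031297100643303424,
    63136979903696834425570712517691154173807276719978067902149723812465022418915738779648,
    126304314008834695867874541627676425924089787374263707240107554447115088559539992133632,
    252608628017669391735749083255352851848180288546640874619541248638395622697642470932480) ::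
  (216, 27613725374230777320752437771765347240558135825417732112216071006584832,
    14477600938963174429001135934078049754516737334916675428474023568464364437504,
    7590432441199277758603190206489244096197824884525549916791251703524895161113903104,
    986752453194021114545164857418852610597860336560796204127642534921199136968506605568,
    126304314008834702767935891751543298370217810809117536180908753299792867563760099786752,
    252608628017669405535871783503086596743358625067121460446339086627921357232890047365120) ::
  (222, 1767278529237350408377198870902338513588694410081475007830415113367584768,
    229746195324174032097380497463244172602875808083286272580431775309095763968,
    118600506893711761613525925525642603928353338046313860118281726782488727556980736,
    62180822558304486795430819921407064642870066390589823302083329459774078948908218712064,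
    126304314008834702661781101749637654180155104576864218495885495539390956087161370181632,
    252608628017669405323562203499275308360355892232989885908643934705370429202321886937088) ::
  (66, 19342814267037046378856448,
    10141244091917315130976230178816,
    5316932582540516272768772321283424256,
    2787603949835002350359308717643769485230592,
    1461507299651093712265490732785246340223894357008,
    766250739119472620216249605929478891682753827274098720) ::
  (54, 4723519404442971537408,
    2476494136093338136098635776,
    1298396157643288607621437610524676,
    680733524698484535291418281524385022472,
    356900418197119060038942665559352330013443088,
    187118606455731157749697172391896865389164393269280) ::
  (60, 73804995091394199552,
    38695218571187143061798912,
    20287439963171773933966442102784,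
    10636461323413820854707290411777425416,
    5576569034329985313108460707124406074278928,
    2923728225870799339839018318586504040757529282592) ::
  (234, 7238772424502352889971327047241655187028871957818305966824769717950174199808,
    3795216220543562397516073778302956274848035591924396963521894434331522351105048576,
    493376226596900129745700902633043951858003339674887625469978996192129064909513162752,
    63152157004417130528927346860861900328301652772547065795456689939888114954840332828672,
    126304314008834261057854693822157434409101261085768291814499381914801527905589009580032,
    252608628017668522115709387644315635066018627044854612454073711842924245884557504544768) ::
  (240, 113105825871190426136140727737749664869676442245214400501146567255525425152,
    59300249913175227880080720566832510627525625772196690699220316920804846717632512,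
    31090411279145176036416140220994054764194257448812900546846844985668724996697158057984,
    63152157004403216608292217133698607979885360909852872685011252820477899802169583861760,
    126304314008806433216584434268966874611038713272057069077617039116119406408215405002752,
    252608628017612866433168868537933761197622556457379002896168126652446600624710258524160) ::
  (246, 29642776612031369953492911982236277394747945992666075580480748787329620244430848,
    15541411349695825756079204296180257582662022732547528473990487601163475704659486703616,
    31568489951396106089638674960776609407872653989827337251216876781629293804213399191552,
    63152157003512725687643911432361195354049946198595722496048090482776407136688911941632,
    126304314007025451375287822864746916624525954763634434425027345551102245629688390090752,
    252608628014050902750575645729493833436169802182163632361631785608770237943881146564608) ::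
  (264, 7770676032184351445088445918671346701368805554301455716969545410105735969356080218112,
    15784185690374464735554199121121646416499869066803013481483010635575595583070065917952,
    31575959931109296680199754724717345778658241431478173676371541255564723161948800155648,
    63151919862218593361242213521069628084748542566259845865768697445135886967127282810880,
    126303839724437186722484433471461091763190073963541598038746509160405242611322461356032,
    252607679448874373444968866942971235359232272659969174943355347491909347935266055127040) ::
  (48, 73786980693958459392,
    38685776107472668193726464,
    20282488184129777041506852421888,
    10633865165081033135831103201460912648,
    5575207899670004700719798022404656754394128,
    2923014599302187424530981467931666914683356579872) ::
  (42, 1153203048303034368,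
    149916387485449453568,
    77390441754042716728082436,
    40574879926352771204785501143560,
    21272922646827641727861254528520225808,
    11153138068659970626216958307596222079305760) ::
  (36, 18018796556255232,
    9447075409291603607554,
    4952988272259859495626211588,
    2596792315286577359357522131059208,
    1361467049396969070583124792325410194448,
    713800836394238120077885331695163213307054112) ::
  (30, 281474993491968,
    147574524335756943488,
    77371552216071232000377092,
    40564976368259556334804928594440,
    21267730330162066271666709985369326608,
    11150415799340009401439596053816478403790880) ::
  (252, 1897600758448744795988643557472116457348496610510321999367312432942330465434468352,
    246688098598336823689148245808489512851140614733682724555540807083601183015102840832,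
    31576078473260651657632901663255289745828268423335156681539985568012368380740897865728,
    63152156946521306766139182409874398324116664467197726033664782536670168453204295024640,
    126304313893042613532304692894235211472290583421453103796247034745058176303317859172352,
    252608627786085227064609385989337690449577077924254528039666073560166948598452406190080) ::
  (0, 262208,
    137473040512,
    72075465465020672,
    37788301637724760211968,
    19811953089039439082016539648,
    10387169261146309437432287547492352) ::
  (258, 121446455775958397210757017321818718812555105386207165665167629216286544081083957248,
    15788038324764089377131256381965514934270892660276591759019136072188585561195123048448,
    31576076649535247868379462165564538664025394674607538295678598044408492782843716435968,
    63152153299070495790691984915765015083702610360638981424996551865229186732387112845312,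
    126304306598140991581384381308127508163756505906679966511376417019000368797119552684032,
    252608613196281983162768762619394333630048994718062580437941900988327951201991579926528) ::
  (270, 121416813001113644264728583149656494708144668270132761680773528074780518319896133632,
    15784185690144828968385490133965643790105705091320878627372336012813908681780287766528,
    31568489951396104337235456708612498413423695715904046535545331287628524336427741216768,
    63136979903696834425557342742149013254542346969875210855890473371302443575710194860032,
    126273959807393675752861443651025664174004949180805247052950569543895750534865388306432,
    252547919614787351505775543451024157996124407335725797563736078431227179863549314859008) ::
  (276, 7772573169661337421488449108596398004003526744717258602570728269842338821189373263872,
    15545205639346375503533479513483493582301862845325414096315315246899887694890263379968,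
    31090411279145174283591774064360910280887709263109903287974343673263789177699018211328,
    62180822558304486795417446931988838152742637234328516131229339146590221676304977100800,
    124361645116608973698701015033249551816788916491504841929737389846004845686009314148352,
    248723290233217947397402853019694059626280403353813691182241406269093682036709282283520) ::
  (12, 1073741888,
    562952134459522,
    295149048675808837892,
    154743104432142472590656008,
    81129952736519112669627036992528,
    42535460660324132543333420005098260512) ::
  []

/-- The parity of a column, read off from the colors of its four outer vertices. -/
def colPar (u0 w0 u1 w1 : ℕ) : Bool :=
  cond (Nat.beq u0 3) false <| cond (Nat.beq u1 3) false <|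
  cond (Nat.beq w0 3) true <| cond (Nat.beq w1 3) true <|
  cond (Nat.beq w0 2) false <| cond (Nat.beq w1 2) false true

/-- The two middle columns have different parities. -/
def flipOK (acc : List ℕ) : Bool :=
  match acc with
  | [_, p29, p27, _, p26, p24, p23, p20, p18, p21, _, _] =>
    xor (colPar p18 p20 p21 p23) (colPar p24 p26 p27 p29)
  | _ => false

/-- After the middle columns have been colored: either they have different parities, or
the coloring does not extend. -/
noncomputable def phase2 (f : ℕ) (acc : List ℕ) : Bool :=
  cond (flipOK acc) true (search (fun _ _ => false) items2 f [])

theorem search_1 : search phase2 items1 (Nat.lor 0 item0.2.1) [1] = true := by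
  decide +kernel

theorem search_2 : search phase2 items1 (Nat.lor 0 item0.2.2.1) [2] = true := by
  decide +kernel

theorem search_3 : search phase2 items1 (Nat.lor 0 item0.2.2.2.1) [3] = true := by
  decide +kernel

theorem search_4 : search phase2 items1 (Nat.lor 0 item0.2.2.2.2.1) [4] = true := by
  decide +kernel

theorem search_5 : search phase2 items1 (Nat.lor 0 item0.2.2.2.2.2.1) [5] = true := by
  decide +kernel

theorem search_6 : search phase2 items1 (Nat.lor 0 item0.2.2.2.2.2.2) [6] = true := by
  decide +kernel

/-- Distance of the positions `p = 3 * i + a` and `q = 3 * j + b` in the infinite strip. -/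
def Dn (a i b j : ℕ) : ℕ :=
  if a = 1 ∧ b = 1 then
    (if i = j then 0 else if i / 2 = j / 2 then 1 else (i - j) + (j - i) + 2)
  else (i - j) + (j - i) + ((a - b) + (b - a))

/-- The set of pairs `(q, e + 1)` forbidden by giving color `e + 1` to `p`. -/
def maskUpTo (p e : ℕ) : ℕ → ℕ
  | 0 => 0
  | q + 1 =>
    if q ≠ p ∧ Dn (p % 3) (p / 3) (q % 3) (q / 3) ≤ e + 1 then
      maskUpTo p e q ||| 2 ^ (6 * q + e) else maskUpTo p e q

/-- The item has the masks it should have. -/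
def itemOK (it : SItem) : Bool :=
  decide (it.1 = 6 * (it.1 / 6) ∧ it.1 / 6 < 48 ∧
    it.2.1 = maskUpTo (it.1 / 6) 0 48 ∧
    it.2.2.1 = maskUpTo (it.1 / 6) 1 48 ∧
    it.2.2.2.1 = maskUpTo (it.1 / 6) 2 48 ∧
    it.2.2.2.2.1 = maskUpTo (it.1 / 6) 3 48 ∧
    it.2.2.2.2.2.1 = maskUpTo (it.1 / 6) 4 48 ∧
    it.2.2.2.2.2.2 = maskUpTo (it.1 / 6) 5 48)

theorem items1_ok : (item0 :: items1).all itemOK = true := by decide +kernel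

theorem items2_ok : items2.all itemOK = true := by decide +kernel

theorem maskUpTo_spec (p e n b : ℕ) (h : (maskUpTo p e n).testBit b = true) :
    ∃ q, q < n ∧ b = 6 * q + e ∧ q ≠ p ∧
      Dn (p % 3) (p / 3) (q % 3) (q / 3) ≤ e + 1 := by
  induction n with
  | zero => simp [maskUpTo] at h
  | succ n ih =>
    rw [maskUpTo] at h
    split_ifs at h with hc
    · rw [Nat.testBit_or, Bool.or_eq_true] at h
      rcases h with h | h
      · obtain ⟨q, hq, h'⟩ := ih h
        exact ⟨q, by omega, h'⟩
      · rw [Nat.testBit_two_pow] at h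
        exact ⟨n, by omega, by simpa using (of_decide_eq_true h).symm, hc.1, hc.2⟩
    · obtain ⟨q, hq, h'⟩ := ih h
      exact ⟨q, by omega, h'⟩

theorem bitFree_of (f s : ℕ) (h : ¬ f.testBit s = true) : bitFree f s = true := by
  unfold bitFree
  rw [Nat.beq_eq]
  by_contra hne
  apply h
  rw [Nat.testBit]
  have h2 : (f >>> s) &&& 1 ≠ 0 := hne
  simpa [Nat.and_comm] using h2

/-- All the bits in `f` are really forbidden for the coloring `F`. -/
def SInv (F : ℕ → ℕ) (f : ℕ) : Prop :=
  ∀ q e, q < 48 → e < 6 → f.testBit (6 * q + e) = true → F q ≠ e + 1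

theorem SInv.lor {F : ℕ → ℕ}
    (hC : ∀ p q, p < 48 → q < 48 → p ≠ q → F p = F q →
      F p < Dn (p % 3) (p / 3) (q % 3) (q / 3))
    {f p e K : ℕ} (hf : SInv F f) (hp : p < 48) (he : e < 6) (hpe : F p = e + 1)
    (hK : K = maskUpTo p e 48) : SInv F (Nat.lor f K) := by
  intro q e' hq he' hb hqe
  have hb' : (f ||| K).testBit (6 * q + e') = true := hb
  rw [Nat.testBit_or, Bool.or_eq_true] at hb'
  rcases hb' with hb' | hb'
  · exact hf q e' hq he' hb' hqe
  · rw [hK] at hb'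
    obtain ⟨q', hq', heq, hne, hD⟩ := maskUpTo_spec _ _ _ _ hb'
    have h1 : q' = q := by omega
    have h2 : e' = e := by omega
    subst h1 h2
    have := hC p q' hp hq hne.symm (by rw [hpe, hqe])
    omega

theorem search_cons (k : ℕ → List ℕ → Bool) (it : SItem) (l : List SItem) (f : ℕ)
    (acc : List ℕ) : search k (it :: l) f acc =
      and (cond (bitFree f it.1) (search k l (Nat.lor f it.2.1) (1 :: acc)) true)
      (and (cond (bitFree f (it.1 + 1)) (search k l (Nat.lor f it.2.2.1) (2 :: acc)) true)
      (and (cond (bitFree f (it.1 + 2)) (search k l (Nat.lor f it.2.2.2.1) (3 :: acc)) true)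
      (and (cond (bitFree f (it.1 + 3)) (search k l (Nat.lor f it.2.2.2.2.1) (4 :: acc)) true)
      (and (cond (bitFree f (it.1 + 4)) (search k l (Nat.lor f it.2.2.2.2.2.1) (5 :: acc)) true)
      (cond (bitFree f (it.1 + 5))
        (search k l (Nat.lor f it.2.2.2.2.2.2) (6 :: acc)) true))))) := rfl

theorem search_true : search phase2 (item0 :: items1) 0 [] = true := by
  rw [search_cons, search_1, search_2, search_3, search_4, search_5, search_6]
  simp

theorem search_sound {F : ℕ → ℕ} (hF : ∀ p, p < 48 → 1 ≤ F p ∧ F p ≤ 6)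
    (hC : ∀ p q, p < 48 → q < 48 → p ≠ q → F p = F q →
      F p < Dn (p % 3) (p / 3) (q % 3) (q / 3))
    (k : ℕ → List ℕ → Bool) (l : List SItem) (hl : l.all itemOK = true) :
    ∀ (f : ℕ) (acc : List ℕ), search k l f acc = true → SInv F f →
      ∃ f', SInv F f' ∧ k f' ((l.map fun it => F (it.1 / 6)).reverse ++ acc) = true := by
  induction l with
  | nil => intro f acc hs hf; exact ⟨f, hf, hs⟩
  | cons it l ih =>
    intro f acc hs hf
    rw [List.all_cons, Bool.and_eq_true] at hl
    obtain ⟨hit, hl⟩ := hl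
    obtain ⟨h0, hp, k1, k2, k3, k4, k5, k6⟩ := of_decide_eq_true hit
    rw [search_cons] at hs
    simp only [Bool.and_eq_true] at hs
    obtain ⟨s1, s2, s3, s4, s5, s6⟩ := hs
    have key : ∀ e K, e < 6 → F (it.1 / 6) = e + 1 → K = maskUpTo (it.1 / 6) e 48 →
        cond (bitFree f (it.1 + e)) (search k l (Nat.lor f K) ((e + 1) :: acc)) true = true →
        ∃ f', SInv F f' ∧
          k f' (((it :: l).map fun it => F (it.1 / 6)).reverse ++ acc) = true := by
      intro e K he hFe hK hs
      rw [bitFree_of f (it.1 + e) (by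
        intro hb; rw [h0] at hb; exact hf _ _ hp he hb hFe)] at hs
      obtain ⟨f', hf', hk⟩ := ih hl _ _ hs (hf.lor hC hp he hFe hK)
      refine ⟨f', hf', ?_⟩
      simpa [hFe] using hk
    have hr := hF _ hp
    obtain h | h | h | h | h | h : F (it.1 / 6) = 0 + 1 ∨ F (it.1 / 6) = 1 + 1 ∨
      F (it.1 / 6) = 2 + 1 ∨ F (it.1 / 6) = 3 + 1 ∨ F (it.1 / 6) = 4 + 1 ∨
      F (it.1 / 6) = 5 + 1 := by omega
    · exact key 0 _ (by norm_num) h k1 s1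
    · exact key 1 _ (by norm_num) h k2 s2
    · exact key 2 _ (by norm_num) h k3 s3
    · exact key 3 _ (by norm_num) h k4 s4
    · exact key 4 _ (by norm_num) h k5 s5
    · exact key 5 _ (by norm_num) h k6 s6

theorem window_flip {F : ℕ → ℕ} (hF : ∀ p, p < 48 → 1 ≤ F p ∧ F p ≤ 6)
    (hC : ∀ p q, p < 48 → q < 48 → p ≠ q → F p = F q →
      F p < Dn (p % 3) (p / 3) (q % 3) (q / 3)) :
    xor (colPar (F 18) (F 20) (F 21) (F 23)) (colPar (F 24) (F 26) (F 27) (F 29)) = true := by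
  obtain ⟨f', hf', hk⟩ := search_sound hF hC phase2 (item0 :: items1) items1_ok 0 []
    search_true (by intro q e _ _ hb; simp at hb)
  rw [phase2] at hk
  cases hfl : flipOK ((List.map (fun it => F (it.1 / 6)) (item0 :: items1)).reverse ++ []) with
  | true => exact hfl
  | false =>
    rw [hfl] at hk
    have hk2 : search (fun _ _ => false) items2 f' [] = true := hk
    obtain ⟨_, _, h⟩ := search_sound hF hC (fun _ _ => false) items2 items2_ok f' [] hk2 hf'
    simp at h

end Search

section Upper

/-- There is a walk of length at most `k`. -/
def WLe {V : Type*} (G : SimpleGraph V) (x y : V) (k : ℕ) : Prop :=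
  ∃ p : G.Walk x y, p.length ≤ k

theorem WLe.refl {V : Type*} (G : SimpleGraph V) (x : V) : WLe G x x 0 :=
  ⟨SimpleGraph.Walk.nil, by simp⟩

theorem WLe.trans {V : Type*} {G : SimpleGraph V} {x y z : V} {k l : ℕ}
    (h : WLe G x y k) (h' : WLe G y z l) : WLe G x z (k + l) := by
  obtain ⟨p, hp⟩ := h
  obtain ⟨q, hq⟩ := h'
  exact ⟨p.append q, by rw [SimpleGraph.Walk.length_append]; omega⟩

theorem WLe.symm {V : Type*} {G : SimpleGraph V} {x y : V} {k : ℕ}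
    (h : WLe G x y k) : WLe G y x k := by
  obtain ⟨p, hp⟩ := h
  exact ⟨p.reverse, by rw [SimpleGraph.Walk.length_reverse]; omega⟩

theorem WLe.of_adj {V : Type*} {G : SimpleGraph V} {x y : V} (h : G.Adj x y) :
    WLe G x y 1 := ⟨h.toWalk, by simp⟩

theorem WLe.mono {V : Type*} {G : SimpleGraph V} {x y : V} {k l : ℕ}
    (h : WLe G x y k) (hkl : k ≤ l) : WLe G x y l := by
  obtain ⟨p, hp⟩ := h
  exact ⟨p, by omega⟩

theorem WLe.dist_le {V : Type*} {G : SimpleGraph V} {x y : V} {k : ℕ}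
    (h : WLe G x y k) : G.dist x y ≤ k := by
  obtain ⟨p, hp⟩ := h
  exact (SimpleGraph.dist_le p).trans hp

theorem WLe.reachable {V : Type*} {G : SimpleGraph V} {x y : V} {k : ℕ}
    (h : WLe G x y k) : G.Reachable x y := by
  obtain ⟨p, hp⟩ := h
  exact ⟨p⟩

theorem HP_row (n : ℕ) (a : Fin 3) (ha : a ≠ 1) (k : ℕ) : ∀ (i j : Fin (2 * n)),
    (j : ℕ) = (i : ℕ) + k → WLe (HPGraph n) (a, i) (a, j) k := by
  induction k with
  | zero =>
    intro i j h
    have : j = i := Fin.ext h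
    subst this
    exact WLe.refl _ _
  | succ k ih =>
    intro i j h
    have hj := j.isLt
    refine (ih i ⟨(i : ℕ) + k, by omega⟩ rfl).trans (WLe.of_adj ?_)
    rw [HPGraph, SimpleGraph.fromRel_adj]
    refine ⟨?_, Or.inl (Or.inl ⟨?_, ?_⟩)⟩
    · intro he
      have := congrArg (fun x => (x.2 : ℕ)) he
      simp only at this
      omega
    · fin_cases a <;> simp_all
    · simp only; omega

theorem HP_row' (n : ℕ) (a : Fin 3) (ha : a ≠ 1) (i j : Fin (2 * n)) :
    WLe (HPGraph n) (a, i) (a, j) (((i : ℕ) - j) + (j - i)) := by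
  rcases le_total (i : ℕ) j with h | h
  · exact (HP_row n a ha (j - i) i j (by omega)).mono (by omega)
  · exact (HP_row n a ha (i - j) j i (by omega)).symm.mono (by omega)

theorem HP_col (n : ℕ) (a : Fin 3) (ha : a ≠ 1) (i : Fin (2 * n)) :
    WLe (HPGraph n) (1, i) (a, i) 1 := by
  apply WLe.of_adj
  rw [HPGraph, SimpleGraph.fromRel_adj]
  fin_cases a <;> simp_all

theorem HP_mid (n : ℕ) (i j : Fin (2 * n)) (hne : i ≠ j) (h : (i : ℕ) / 2 = j / 2) :
    WLe (HPGraph n) (1, i) (1, j) 1 := by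
  have hne' : (i : ℕ) ≠ j := fun h => hne (Fin.ext h)
  apply WLe.of_adj
  rw [HPGraph, SimpleGraph.fromRel_adj]
  refine ⟨by simp [hne], ?_⟩
  rcases le_total (i : ℕ) j with hl | hl
  · refine Or.inl (Or.inr (Or.inr ⟨rfl, rfl, ?_, ?_⟩))
    · simp only; omega
    · simp only [Nat.even_iff]; omega
  · refine Or.inr (Or.inr (Or.inr ⟨rfl, rfl, ?_, ?_⟩))
    · simp only; omega
    · simp only [Nat.even_iff]; omega

theorem HP_upper (n : ℕ) (a b : Fin 3) (i j : Fin (2 * n)) :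
    WLe (HPGraph n) (a, i) (b, j) (Dn a i b j) := by
  by_cases ha : a = 1
  · by_cases hb : b = 1
    · subst ha hb
      by_cases hij : i = j
      · subst hij
        exact (WLe.refl _ _).mono (by omega)
      · have hij' : (i : ℕ) ≠ j := fun h => hij (Fin.ext h)
        by_cases h2 : (i : ℕ) / 2 = j / 2
        · exact (HP_mid n i j hij h2).mono (by simp [Dn, hij', h2])
        · refine (((HP_col n 0 (by decide) i).trans (HP_row' n 0 (by decide) i j)).trans
            (HP_col n 0 (by decide) j).symm).mono ?_
          simp [Dn, hij', h2]
          omega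
    · subst ha
      refine ((HP_col n b hb i).trans (HP_row' n b hb i j)).mono ?_
      have : (b : ℕ) ≠ 1 := fun h => hb (Fin.ext h)
      have := b.isLt
      simp [Dn, *]
      omega
  · have ha' : (a : ℕ) ≠ 1 := fun h => ha (Fin.ext h)
    by_cases hb : b = 1
    · subst hb
      refine ((HP_row' n a ha i j).trans (HP_col n a ha j).symm).mono ?_
      have := a.isLt
      simp [Dn, ha']
      omega
    · have hb' : (b : ℕ) ≠ 1 := fun h => hb (Fin.ext h)
      by_cases hab : a = b
      · subst hab
        refine (HP_row' n a ha i j).mono ?_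
        simp [Dn, ha']
      · have hab' : (a : ℕ) ≠ b := fun h => hab (Fin.ext h)
        refine ((HP_row' n a ha i j).trans
          ((HP_col n a ha j).symm.trans (HP_col n b hb j))).mono ?_
        have := a.isLt
        have := b.isLt
        simp [Dn, ha']
        omega

theorem HP_reachable (n : ℕ) (x y : Fin 3 × Fin (2 * n)) : (HPGraph n).Reachable x y :=
  (HP_upper n x.1 y.1 x.2 y.2).reachable

theorem HP_to_H_adj (n r s : ℕ) (hr : 1 ≤ r) (x y : Fin 3 × Fin (2 * n))
    (h : (HPGraph n).Adj x y) :
    (HGraph r).Adj (x.1, ((2 * s + (x.2 : ℕ) : ℕ) : ZMod (2 * r)))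
      (y.1, ((2 * s + (y.2 : ℕ) : ℕ) : ZMod (2 * r))) := by
  have : Fact (1 < 2 * r) := ⟨by omega⟩
  have main : ∀ x y : Fin 3 × Fin (2 * n),
      (((x.1 = 0 ∧ y.1 = 0 ∨ x.1 = 2 ∧ y.1 = 2) ∧ (y.2 : ℕ) = (x.2 : ℕ) + 1) ∨
      ((x.1 = 0 ∧ y.1 = 1 ∨ x.1 = 1 ∧ y.1 = 2) ∧ x.2 = y.2) ∨
      (x.1 = 1 ∧ y.1 = 1 ∧ (y.2 : ℕ) = (x.2 : ℕ) + 1 ∧ Even (x.2 : ℕ))) →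
      (HGraph r).Adj (x.1, ((2 * s + (x.2 : ℕ) : ℕ) : ZMod (2 * r)))
        (y.1, ((2 * s + (y.2 : ℕ) : ℕ) : ZMod (2 * r))) := by
    rintro ⟨a, i⟩ ⟨b, j⟩ h
    simp only at h
    rw [HGraph, SimpleGraph.fromRel_adj]
    simp only
    rcases h with ⟨hab, hij⟩ | ⟨hab, hij⟩ | ⟨ha, hb, hij, m, hm⟩
    · refine ⟨?_, Or.inl (Or.inl ⟨hab, ?_⟩)⟩
      · rw [hij]
        intro he
        have := congrArg Prod.snd he
        push_cast at this
        rw [← add_assoc] at this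
        simp at this
      · rw [hij]; push_cast; ring
    · refine ⟨?_, Or.inl (Or.inr (Or.inl ⟨hab, ?_⟩))⟩
      · intro he
        have := congrArg Prod.fst he
        simp only at this
        subst this
        rcases hab with ⟨h1, h2⟩ | ⟨h1, h2⟩ <;> (rw [h1] at h2; exact absurd h2 (by decide))
      · rw [hij]
    · refine ⟨?_, Or.inl (Or.inr (Or.inr ⟨ha, hb, ((s + m : ℕ) : ZMod (2 * r)), ?_, ?_⟩))⟩
      · rw [hij]
        intro he
        have := congrArg Prod.snd he
        push_cast at this
        rw [← add_assoc] at this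
        simp at this
      · rw [hm]; push_cast; ring
      · rw [hij, hm]; push_cast; ring
  rw [HPGraph, SimpleGraph.fromRel_adj] at h
  rcases h.2 with h | h
  · exact main x y h
  · exact (main y x h).symm

/-- The natural map from `H_P(n)` to `H(r)`, starting at column `s`. -/
def HPtoH (n r s : ℕ) (hr : 1 ≤ r) : HPGraph n →g HGraph r where
  toFun x := (x.1, ((2 * s + (x.2 : ℕ) : ℕ) : ZMod (2 * r)))
  map_rel' := fun {x y} h => HP_to_H_adj n r s hr x y h

theorem H_reachable (r : ℕ) (hr : 1 ≤ r) (x y : Fin 3 × ZMod (2 * r)) :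
    (HGraph r).Reachable x y := by
  have : NeZero (2 * r) := ⟨by omega⟩
  have hs : ∀ x : Fin 3 × ZMod (2 * r), ∃ x', HPtoH r r 0 hr x' = x := by
    rintro ⟨a, i⟩
    refine ⟨(a, ⟨i.val, ZMod.val_lt i⟩), ?_⟩
    simp [HPtoH]
  obtain ⟨x', rfl⟩ := hs x
  obtain ⟨y', rfl⟩ := hs y
  exact (HP_reachable r x' y').map _

/-- A packing coloring of `H(r)` restricts to packing colorings of windows of four columns. -/
theorem window_of_H (r : ℕ) (hr : 4 ≤ r) (c : Fin 3 × ZMod (2 * r) → ℕ)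
    (hc : IsPackingColoring (HGraph r) 6 (fun i => i) c) (s : ℕ) :
    IsPackingColoring (HPGraph 4) 6 (fun i => i)
      (fun x => c (x.1, ((2 * s + (x.2 : ℕ) : ℕ) : ZMod (2 * r)))) := by
  refine ⟨fun v => hc.1 _, ?_⟩
  rintro ⟨a, i⟩ ⟨b, j⟩ hne heq
  have h1 := hc.2 _ _ (fun he => hne ?_) heq
  · refine lt_of_lt_of_le h1 ?_
    obtain ⟨p, hp⟩ := (HP_reachable 4 (a, i) (b, j)).exists_walk_length_eq_dist
    rw [← hp, ← SimpleGraph.Walk.length_map (HPtoH 4 r s (by omega)) p]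
    exact SimpleGraph.dist_le _
  · have e1 := congrArg Prod.fst he
    have e2 := congrArg Prod.snd he
    simp only at e1 e2
    rw [ZMod.natCast_eq_natCast_iff] at e2
    have e3 : (i : ℕ) ≡ j [MOD 2 * r] := Nat.ModEq.add_left_cancel' _ e2
    have hi := i.isLt
    have hj := j.isLt
    have e4 : (i : ℕ) = j := by
      have := e3
      rw [Nat.ModEq, Nat.mod_eq_of_lt (by omega), Nat.mod_eq_of_lt (by omega)] at this
      exact this
    rw [e1, Fin.ext e4]

end Upper

section Parity

/-- If all windows of four columns of a periodic coloring of the strip are packing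
colorings, then the period is even. -/
theorem even_of_windows (G : Fin 3 → ℕ → ℕ) (n : ℕ)
    (hper : ∀ a i, G a (i + 2 * n) = G a i)
    (hwin : ∀ s, IsPackingColoring (HPGraph 4) 6 (fun i => i)
      (fun x => G x.1 (2 * s + (x.2 : ℕ)))) : Even n := by
  have hcol : ∀ a i, 1 ≤ G a i ∧ G a i ≤ 6 := by
    intro a i
    have h := (hwin (i / 2)).1 (a, ⟨i % 2, by omega⟩)
    simp only at h
    rwa [show 2 * (i / 2) + i % 2 = i by omega] at h
  have hfar : ∀ (a b : Fin 3) (i j : ℕ), i ≤ j → (a, i) ≠ (b, j) → G a i = G b j →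
      G a i < Dn a i b j := by
    intro a b i j hij hne heq
    have h6 := (hcol a i).2
    by_cases hD : j - i ≤ 6
    · have h := (hwin (i / 2)).2 (a, ⟨i - 2 * (i / 2), by omega⟩)
        (b, ⟨j - 2 * (i / 2), by omega⟩)
        (by
          intro he
          apply hne
          simp only [Prod.mk.injEq, Fin.mk.injEq] at he
          rw [he.1]
          have : i = j := by omega
          rw [this])
      simp only at h
      rw [show 2 * (i / 2) + (i - 2 * (i / 2)) = i by omega,
        show 2 * (i / 2) + (j - 2 * (i / 2)) = j by omega] at h
      refine lt_of_lt_of_le (h heq) ((HP_upper 4 _ _ _ _).dist_le.trans ?_)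
      have t1 : i - 2 * (i / 2) = j - 2 * (i / 2) ↔ i = j := by omega
      have t2 : (i - 2 * (i / 2)) / 2 = (j - 2 * (i / 2)) / 2 ↔ i / 2 = j / 2 := by omega
      have t3 : (i - 2 * (i / 2)) - (j - 2 * (i / 2)) +
        ((j - 2 * (i / 2)) - (i - 2 * (i / 2))) = (i - j) + (j - i) := by omega
      simp only [Dn, t1, t2, t3, le_refl]
    · refine lt_of_le_of_lt h6 ?_
      unfold Dn
      split_ifs <;> omega
  have Dsymm : ∀ a i b j, Dn a i b j = Dn b j a i := by
    intro a i b j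
    unfold Dn
    split_ifs <;> omega
  have hflip : ∀ s, xor (colPar (G 0 (2 * s + 6)) (G 2 (2 * s + 6)) (G 0 (2 * s + 7))
      (G 2 (2 * s + 7))) (colPar (G 0 (2 * s + 8)) (G 2 (2 * s + 8)) (G 0 (2 * s + 9))
      (G 2 (2 * s + 9))) = true := by
    intro s
    have := window_flip (F := fun p => G ⟨p % 3, Nat.mod_lt _ (by norm_num)⟩ (2 * s + p / 3))
      (fun p _ => hcol _ _) (by
        intro p q hp hq hne heq
        have hne' : ((⟨p % 3, Nat.mod_lt _ (by norm_num)⟩ : Fin 3), 2 * s + p / 3) ≠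
            ((⟨q % 3, Nat.mod_lt _ (by norm_num)⟩ : Fin 3), 2 * s + q / 3) := by
          intro he
          simp only [Prod.mk.injEq, Fin.mk.injEq] at he
          omega
        have hsh : Dn (p % 3) (2 * s + p / 3) (q % 3) (2 * s + q / 3) =
            Dn (p % 3) (p / 3) (q % 3) (q / 3) := by
          unfold Dn
          split_ifs <;> omega
        rw [← hsh]
        rcases le_total (p / 3) (q / 3) with hl | hl
        · exact hfar _ _ _ _ (by omega) hne' heq
        · rw [Dsymm, heq]
          exact hfar _ _ _ _ (by omega) hne'.symm heq.symm)
    exact this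
  set P : ℕ → Bool := fun s => colPar (G 0 (2 * s + 6)) (G 2 (2 * s + 6)) (G 0 (2 * s + 7))
      (G 2 (2 * s + 7)) with hP
  have hstep : ∀ s, P (s + 1) = !(P s) := by
    intro s
    have h : xor (P s) (P (s + 1)) = true := hflip s
    revert h
    cases P s <;> cases P (s + 1) <;> simp
  have hiter : ∀ s, P s = xor (P 0) (decide (s % 2 = 1)) := by
    intro s
    induction s with
    | zero => simp
    | succ s ih =>
      rw [hstep, ih]
      rcases Nat.mod_two_eq_zero_or_one s with h | h
      · have : (s + 1) % 2 = 1 := by omega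
        simp [h, this]
      · have : (s + 1) % 2 = 0 := by omega
        simp [h, this]
  have hp : P n = P 0 := by
    simp only [hP]
    rw [show 2 * n + 6 = 2 * 0 + 6 + 2 * n by ring, show 2 * n + 7 = 2 * 0 + 7 + 2 * n by ring]
    simp only [hper]
  rw [hiter n] at hp
  rw [Nat.even_iff]
  rcases Nat.mod_two_eq_zero_or_one n with h | h
  · exact h
  · simp [h] at hp

/-- A closed walk in `D` unrolls to a periodic coloring of the strip. -/
theorem even_of_closed_walk (n : ℕ) (hn : 1 ≤ n) (w : ℕ → (Fin 3 × Fin (2 * 3) → ℕ))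
    (harc : ∀ i, i < n → DArc (w i) (w (i + 1))) (hw : w n = w 0) : Even n := by
  have harc' : ∀ i, DArc (w (i % n)) (w ((i + 1) % n)) := by
    intro i
    have hlt := Nat.mod_lt i hn
    have h := harc (i % n) hlt
    by_cases h1 : i % n + 1 < n
    · rwa [Nat.add_mod, Nat.mod_eq_of_lt (show 1 < n by omega), Nat.mod_eq_of_lt h1]
    · have h2 : i % n + 1 = n := by omega
      have h3 : (i + 1) % n = 0 := by
        rw [← Nat.mod_add_mod, h2, Nat.mod_self]
      rw [h3, ← hw]
      rwa [h2] at h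
  have hG : ∀ (k s : ℕ) (a : Fin 3) (t : ℕ) (ht : t < 2 * 3), t / 2 = k →
      w (s % n) (a, ⟨t, ht⟩) =
        w ((s + k) % n) (a, ⟨t % 2, by omega⟩) := by
    intro k
    induction k with
    | zero =>
      intro s a t ht hk
      have : t % 2 = t := by omega
      simp [this]
    | succ k ih =>
      intro s a t ht hk
      rw [(harc' s).1 a ⟨t, ht⟩ (by simp only; omega)]
      simp only
      rw [ih (s + 1) a (t - 2) (by omega) (by omega)]
      have e1 : s + 1 + k = s + (k + 1) := by ring
      have e2 : (t - 2) % 2 = t % 2 := by omega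
      simp only [e1, e2]
  refine even_of_windows (fun a i => w ((i / 2) % n) (a, ⟨i % 2, by omega⟩)) n ?_ ?_
  · intro a i
    have e1 : (i + 2 * n) / 2 = i / 2 + n := by omega
    have e2 : (i + 2 * n) % 2 = i % 2 := by omega
    simp only [e1, e2, Nat.add_mod_right]
  · intro s
    have h := (harc' s).2
    convert h using 1
    funext x
    obtain ⟨a, t, ht⟩ := x
    have e1 : (2 * s + t) / 2 = s + t / 2 := by omega
    have e2 : (2 * s + t) % 2 = t % 2 := by omega
    simp only [glueColoring, e1, e2]
    split_ifs with h6
    · rw [hG (t / 2) s a t h6 rfl]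
    · rw [hG (t / 2 - 1) (s + 1) a (t - 2) (by omega) (by omega)]
      have e3 : s + 1 + (t / 2 - 1) = s + t / 2 := by omega
      have e4 : (t - 2) % 2 = t % 2 := by omega
      simp only [e3, e4]

end Parity

section Lower

/-- The periodic coloring of the infinite strip. -/
def stripCol (a : Fin 3) (I : ℤ) : ℕ :=
  if a = 1 then (if I % 4 = 0 then 4 else if I % 4 = 2 then 5 else 1)
  else if I % 2 = 0 then 1
  else if a = 0 then (if I % 4 = 1 then 2 else 3)
  else (if I % 4 = 1 then 3 else 2)

theorem stripCol_congr (a : Fin 3) (I J : ℤ) (h : I % 4 = J % 4) :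
    stripCol a I = stripCol a J := by
  have h2 : I % 2 = J % 2 := by omega
  simp only [stripCol, h, h2]

theorem stripCol_range (a : Fin 3) (I : ℤ) : 1 ≤ stripCol a I ∧ stripCol a I ≤ 6 := by
  unfold stripCol
  split_ifs <;> omega

/-- The points `(a, I)` and `(b, J)` of the strip may have distance at most `n`. -/
def Near (a : ℤ) (I : ℤ) (b : ℤ) (J : ℤ) (n : ℕ) : Prop :=
  |a - b| + |I - J| ≤ n ∧ (a = 1 → b = 1 → I / 2 = J / 2 ∨ |I - J| + 2 ≤ n)

/-- Adjacency in the infinite strip. -/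
def EdgeZ (a : ℤ) (I : ℤ) (b : ℤ) (J : ℤ) : Prop :=
  (a = b ∧ a ≠ 1 ∧ (J = I + 1 ∨ J = I - 1)) ∨ (|a - b| = 1 ∧ I = J) ∨
  (a = 1 ∧ b = 1 ∧ I / 2 = J / 2)

theorem Near.step {a I b J b' J' : ℤ} {n : ℕ} (h : Near a I b J n) (he : EdgeZ b J b' J') :
    Near a I b' J' (n + 1) := by
  unfold Near EdgeZ at *
  obtain ⟨h1, h2⟩ := h
  push_cast
  constructor
  · simp only [abs_eq_max_neg] at *
    omega
  · intro ha hb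
    have h2 := h2 ha
    simp only [abs_eq_max_neg] at *
    omega

theorem strip_far (a b : Fin 3) (I J : ℤ) (n : ℕ) (hne : (a, I) ≠ (b, J))
    (heq : stripCol a I = stripCol b J)
    (h : Near ((a : ℕ) : ℤ) I ((b : ℕ) : ℤ) J n) : stripCol a I < n := by
  have hIJ : a = b → I ≠ J := by
    intro h1 h2
    exact hne (by rw [h1, h2])
  unfold Near at h
  obtain ⟨h1, h2⟩ := h
  simp only [abs_eq_max_neg] at h1 h2
  unfold stripCol at *
  fin_cases a <;> fin_cases b <;> simp at * <;> split_ifs at * <;> omega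

/-- Lower bounds on the lengths of walks from lifting to the strip. -/
theorem walk_near {V : Type*} (G : SimpleGraph V) (row : V → Fin 3) (lift : V → ℤ → Prop)
    (hedge : ∀ x y I, G.Adj x y → lift x I →
      ∃ J, lift y J ∧ EdgeZ ((row x : ℕ) : ℤ) I ((row y : ℕ) : ℤ) J)
    (a : ℤ) (I₀ : ℤ) {x y : V} (p : G.Walk x y) :
    ∀ (n : ℕ) (I : ℤ), lift x I → Near a I₀ ((row x : ℕ) : ℤ) I n →
      ∃ J, lift y J ∧ Near a I₀ ((row y : ℕ) : ℤ) J (n + p.length) := by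
  induction p with
  | nil => intro n I hI hn; exact ⟨I, hI, hn⟩
  | cons h p ih =>
    intro n I hI hn
    obtain ⟨J, hJ, he⟩ := hedge _ _ I h hI
    obtain ⟨J', hJ', hn'⟩ := ih (n + 1) J hJ (hn.step he)
    refine ⟨J', hJ', ?_⟩
    rw [SimpleGraph.Walk.length_cons]
    convert hn' using 1
    ring

theorem packing_of_lift {V : Type*} (G : SimpleGraph V) (row : V → Fin 3) (lift : V → ℤ → Prop)
    (hedge : ∀ x y I, G.Adj x y → lift x I →
      ∃ J, lift y J ∧ EdgeZ ((row x : ℕ) : ℤ) I ((row y : ℕ) : ℤ) J)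
    (hconn : ∀ x y, G.Reachable x y) (c : V → ℕ)
    (hex : ∀ x, ∃ I, lift x I)
    (hinj : ∀ x y I, row x = row y → lift x I → lift y I → x = y)
    (hc : ∀ x I, lift x I → c x = stripCol (row x) I) :
    IsPackingColoring G 6 (fun i => i) c := by
  constructor
  · intro x
    obtain ⟨I, hI⟩ := hex x
    rw [hc x I hI]
    exact stripCol_range _ _
  · intro x y hne heq
    obtain ⟨I, hI⟩ := hex x
    obtain ⟨p, hp⟩ := (hconn x y).exists_walk_length_eq_dist
    obtain ⟨J, hJ, hn⟩ := walk_near G row lift hedge ((row x : ℕ) : ℤ) I p 0 I hI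
      (by unfold Near; simp)
    rw [hc x I hI, hc y J hJ] at heq
    simp only
    rw [hc x I hI, ← hp]
    refine strip_far (row x) (row y) I J _ ?_ heq (by simpa using hn)
    intro he
    simp only [Prod.mk.injEq] at he
    exact hne (hinj x y I he.1 hI (he.2 ▸ hJ))

theorem strip_HP (n s : ℕ) : IsPackingColoring (HPGraph n) 6 (fun i => i)
    (fun x => stripCol x.1 (((2 * s + (x.2 : ℕ) : ℕ) : ℤ))) := by
  apply packing_of_lift (HPGraph n) (fun x => x.1)
    (fun x I => I = ((2 * s + (x.2 : ℕ) : ℕ) : ℤ))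
  · rintro ⟨a, i⟩ ⟨b, j⟩ I h rfl
    refine ⟨_, rfl, ?_⟩
    rw [HPGraph, SimpleGraph.fromRel_adj] at h
    simp only [Nat.even_iff] at h
    unfold EdgeZ
    simp only
    push_cast
    rcases h.2 with (⟨⟨rfl, rfl⟩ | ⟨rfl, rfl⟩, h⟩ | ⟨⟨rfl, rfl⟩ | ⟨rfl, rfl⟩, rfl⟩ | ⟨rfl, rfl, h⟩) |
      (⟨⟨rfl, rfl⟩ | ⟨rfl, rfl⟩, h⟩ | ⟨⟨rfl, rfl⟩ | ⟨rfl, rfl⟩, rfl⟩ | ⟨rfl, rfl, h⟩) <;>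
      simp <;> omega
  · exact HP_reachable n
  · intro x; exact ⟨_, rfl⟩
  · rintro ⟨a, i⟩ ⟨b, j⟩ I hr hI hJ
    simp only at hr hI hJ
    subst hr
    have : i = j := Fin.ext (by omega)
    rw [this]
  · rintro x I rfl; rfl

theorem strip_H (r : ℕ) (hr : 1 ≤ r) (he : r % 2 = 0) :
    IsPackingColoring (HGraph r) 6 (fun i => i)
      (fun x => stripCol x.1 ((x.2.val : ℕ) : ℤ)) := by
  have : NeZero (2 * r) := ⟨by omega⟩
  have hpar : ∀ I K : ℤ, (I : ZMod (2 * r)) = (K : ZMod (2 * r)) → I % 4 = K % 4 := by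
    intro I K h
    rw [ZMod.intCast_eq_intCast_iff] at h
    have h4 : ((4 : ℤ)) ∣ ((2 * r : ℕ) : ℤ) := by push_cast; omega
    exact h.of_dvd h4
  apply packing_of_lift (HGraph r) (fun x => x.1) (fun x I => (I : ZMod (2 * r)) = x.2)
  · rintro ⟨a, i⟩ ⟨b, j⟩ I h hI
    simp only at hI
    subst hI
    rw [HGraph, SimpleGraph.fromRel_adj] at h
    simp only at h
    unfold EdgeZ
    simp only
    rcases h.2 with (⟨hab, h⟩ | ⟨hab, h⟩ | ⟨rfl, rfl, k, hk, h⟩) |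
      (⟨hab, h⟩ | ⟨hab, h⟩ | ⟨rfl, rfl, k, h, hk⟩)
    · refine ⟨I + 1, by rw [h]; push_cast; rfl, Or.inl ?_⟩
      rcases hab with ⟨rfl, rfl⟩ | ⟨rfl, rfl⟩ <;> simp
    · refine ⟨I, h, Or.inr (Or.inl ?_)⟩
      rcases hab with ⟨rfl, rfl⟩ | ⟨rfl, rfl⟩ <;> simp
    · obtain ⟨K, rfl⟩ := ZMod.intCast_surjective k
      have := hpar I (2 * K) (by rw [hk]; push_cast; rfl)
      refine ⟨I + 1, by rw [h, ← hk]; push_cast; rfl, Or.inr (Or.inr ⟨rfl, rfl, ?_⟩)⟩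
      omega
    · refine ⟨I - 1, by push_cast; rw [h]; ring, Or.inl ?_⟩
      rcases hab with ⟨rfl, rfl⟩ | ⟨rfl, rfl⟩ <;> simp
    · refine ⟨I, h.symm, Or.inr (Or.inl ?_)⟩
      rcases hab with ⟨rfl, rfl⟩ | ⟨rfl, rfl⟩ <;> simp
    · obtain ⟨K, rfl⟩ := ZMod.intCast_surjective k
      have := hpar I (2 * K + 1) (by rw [hk]; push_cast; rfl)
      refine ⟨I - 1, by push_cast; rw [hk, h]; ring, Or.inr (Or.inr ⟨rfl, rfl, ?_⟩)⟩
      omega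
  · exact H_reachable r hr
  · intro x; exact ZMod.intCast_surjective x.2
  · rintro ⟨a, i⟩ ⟨b, j⟩ I hab hI hJ
    simp only at hab hI hJ
    rw [hab, ← hI, hJ]
  · rintro ⟨a, i⟩ I hI
    apply stripCol_congr
    apply hpar
    simp only at hI
    simp [hI]

end Lower

/-- For `r ≥ 4`, `H(r)` admits a packing 6-coloring iff the digraph `D` (whose vertices
are the packing 6-colorings of `H_P(3)` and whose arcs are given by `DArc`) contains a
closed directed walk of length `r - 2`. -/
theorem packing_6_coloring_iff_closed_walk (r : ℕ) (hr : 4 ≤ r) :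
    (∃ c : Fin 3 × ZMod (2 * r) → ℕ,
      IsPackingColoring (HGraph r) 6 (fun i => i) c) ↔
    (∃ w : ℕ → (Fin 3 × Fin (2 * 3) → ℕ),
      (∀ i, i ≤ r - 2 → IsPackingColoring (HPGraph 3) 6 (fun i => i) (w i)) ∧
      (∀ i, i < r - 2 → DArc (w i) (w (i + 1))) ∧
      w (r - 2) = w 0) := by
  constructor
  · rintro ⟨c, hc⟩
    have hev : Even r := even_of_windows (fun a i => c (a, (i : ZMod (2 * r)))) r
      (by
        intro a i
        have : ((i + 2 * r : ℕ) : ZMod (2 * r)) = (i : ZMod (2 * r)) := by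
          rw [Nat.cast_add, ZMod.natCast_self, add_zero]
        simp only [this])
      (fun s => window_of_H r hr c hc s)
    rw [Nat.even_iff] at hev
    refine ⟨fun s x => stripCol x.1 (((2 * s + (x.2 : ℕ) : ℕ) : ℤ)),
      fun i _ => strip_HP 3 i, fun i _ => ⟨?_, ?_⟩, ?_⟩
    · intro a t ht
      simp only
      congr 2
      omega
    · convert strip_HP 4 i using 1
      funext x
      simp only [glueColoring]
      split_ifs with h
      · rfl
      · congr 2
        omega
    · funext x
      apply stripCol_congr
      push_cast
      omega
  · rintro ⟨w, -, harc, hw⟩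
    have hev := even_of_closed_walk (r - 2) (by omega) w harc hw
    rw [Nat.even_iff] at hev
    exact ⟨_, strip_H r (by omega) (by omega)⟩
end

section
/- For every odd integer r ≥ 3, the H-graph H(r) admits no packing 6-coloring; equivalently, χ_ρ(H(r)) ≥ 7 for odd r ≥ 3. -/
/-- Neighbours of the vertex number `a` (row `a % 3`, column `a / 3`) in the infinite strip. -/
def hgNb (a : ℕ) : List ℕ :=
  if a % 6 = 0 then [a + 1, a + 3, a - 3]
  else if a % 6 = 1 then [a - 1, a + 1, a + 3]
  else if a % 6 = 2 then [a - 1, a + 3, a - 3]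
  else if a % 6 = 3 then [a + 1, a + 3, a - 3]
  else if a % 6 = 4 then [a - 1, a + 1, a - 3]
  else [a - 1, a + 3, a - 3]

/-- Vertices reachable from `a` in at most `n` steps (with repetitions). -/
def hgBall : ℕ → ℕ → List ℕ
  | 0, a => [a]
  | n + 1, a => a :: (hgNb a).flatMap (hgBall n)

/-- Explicit values for `hgOffs`. -/
def hgOffTab : List (List (List ℕ)) := [
  [[],
    [15, 19, 21],
    [12, 15, 16, 19, 20, 21, 22, 24],
    [9, 12, 13, 15, 16, 17, 19, 20, 21, 22, 23, 24, 25, 27],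
    [6, 9, 10, 12, 13, 14, 15, 16, 17, 19, 20, 21, 22, 23, 24, 25, 26, 27, 28, 30],
    [3, 6, 7, 9, 10, 11, 12, 13, 14, 15, 16, 17, 19, 20, 21, 22, 23, 24, 25, 26, 27, 28, 29, 30, 31, 33],
    [3, 4, 6, 7, 8, 9, 10, 11, 12, 13, 14, 15, 16, 17, 19, 20, 21, 22, 23, 24, 25, 26, 27, 28, 29, 30, 31, 32, 33, 34]],
  [[],
    [18, 20, 22],
    [15, 17, 18, 20, 21, 22, 23],
    [12, 14, 15, 16, 17, 18, 20, 21, 22, 23, 24, 26],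
    [9, 11, 12, 13, 14, 15, 16, 17, 18, 20, 21, 22, 23, 24, 25, 26, 27, 29],
    [6, 8, 9, 10, 11, 12, 13, 14, 15, 16, 17, 18, 20, 21, 22, 23, 24, 25, 26, 27, 28, 29, 30, 32],
    [3, 5, 6, 7, 8, 9, 10, 11, 12, 13, 14, 15, 16, 17, 18, 20, 21, 22, 23, 24, 25, 26, 27, 28, 29, 30, 31, 32, 33, 35]],
  [[],
    [17, 19, 23],
    [14, 16, 17, 18, 19, 22, 23, 26],
    [11, 13, 14, 15, 16, 17, 18, 19, 21, 22, 23, 25, 26, 29],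
    [8, 10, 11, 12, 13, 14, 15, 16, 17, 18, 19, 21, 22, 23, 24, 25, 26, 28, 29, 32],
    [5, 7, 8, 9, 10, 11, 12, 13, 14, 15, 16, 17, 18, 19, 21, 22, 23, 24, 25, 26, 27, 28, 29, 31, 32, 35],
    [4, 5, 6, 7, 8, 9, 10, 11, 12, 13, 14, 15, 16, 17, 18, 19, 21, 22, 23, 24, 25, 26, 27, 28, 29, 30, 31, 32, 34, 35]],
  [[],
    [18, 22, 24],
    [15, 18, 19, 22, 23, 24, 25, 27],
    [12, 15, 16, 18, 19, 20, 22, 23, 24, 25, 26, 27, 28, 30],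
    [9, 12, 13, 15, 16, 17, 18, 19, 20, 22, 23, 24, 25, 26, 27, 28, 29, 30, 31, 33],
    [6, 9, 10, 12, 13, 14, 15, 16, 17, 18, 19, 20, 22, 23, 24, 25, 26, 27, 28, 29, 30, 31, 32, 33, 34, 36],
    [6, 7, 9, 10, 11, 12, 13, 14, 15, 16, 17, 18, 19, 20, 22, 23, 24, 25, 26, 27, 28, 29, 30, 31, 32, 33, 34, 35, 36, 37]],
  [[],
    [19, 21, 23],
    [18, 19, 20, 21, 23, 24, 26],
    [15, 17, 18, 19, 20, 21, 23, 24, 25, 26, 27, 29],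
    [12, 14, 15, 16, 17, 18, 19, 20, 21, 23, 24, 25, 26, 27, 28, 29, 30, 32],
    [9, 11, 12, 13, 14, 15, 16, 17, 18, 19, 20, 21, 23, 24, 25, 26, 27, 28, 29, 30, 31, 32, 33, 35],
    [6, 8, 9, 10, 11, 12, 13, 14, 15, 16, 17, 18, 19, 20, 21, 23, 24, 25, 26, 27, 28, 29, 30, 31, 32, 33, 34, 35, 36, 38]],
  [[],
    [20, 22, 26],
    [17, 19, 20, 21, 22, 25, 26, 29],
    [14, 16, 17, 18, 19, 20, 21, 22, 24, 25, 26, 28, 29, 32],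
    [11, 13, 14, 15, 16, 17, 18, 19, 20, 21, 22, 24, 25, 26, 27, 28, 29, 31, 32, 35],
    [8, 10, 11, 12, 13, 14, 15, 16, 17, 18, 19, 20, 21, 22, 24, 25, 26, 27, 28, 29, 30, 31, 32, 34, 35, 38],
    [7, 8, 9, 10, 11, 12, 13, 14, 15, 16, 17, 18, 19, 20, 21, 22, 24, 25, 26, 27, 28, 29, 30, 31, 32, 33, 34, 35, 37, 38]]]

/-- For a vertex `k` with `k % 6 = j`, the numbers `l - 6 * (k / 6) + 18`, where `l` runs through the
vertices other than `k` at distance at most `c` from `k` and less than `6` columns away. -/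
def hgOffs (j c : ℕ) : List ℕ := (hgOffTab.getD j []).getD c []

/-- Admissible colorings of the strip, ignoring the pairs at column distance `6`. -/
def hgValid (y : ℕ → ℕ) : Prop :=
  (∀ p, 1 ≤ y p ∧ y p ≤ 6) ∧
  ∀ k c o, 18 ≤ k → o ∈ hgOffs (k % 6) c → y k = c → y (6 * (k / 6) - 18 + o) ≠ c

/-- Bit mask of the assignments `(l, c)` conflicting with the assignment `(k, c)`. -/
def hgMask (k c : ℕ) : ℕ :=
  (hgOffs (k % 6) c).foldl
    (fun S o => Nat.lor S (Nat.pow 2 (8 * (6 * (k / 6) - 18 + o) + c))) 0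

/-- Pseudo-random low bits, irrelevant for the search, which keep the numbers representing different
partial colorings distinct modulo `2 ^ 40`. -/
def hgTag (k c : ℕ) : ℕ := (Nat.pow 3 (8 * k + c) / Nat.pow 2 20) % Nat.pow 2 40

/-- The choices for vertex `k`. -/
def hgLevel (k : ℕ) : List (ℕ × ℕ) :=
  [1, 2, 3, 4, 5, 6].map fun c => (Nat.xor (Nat.pow 2 (8 * k + c)) (hgTag k c), hgMask k c)

/-- Tries all the choices of one level, `ih` being the search on the following levels. -/
noncomputable def hgTry (ih : ℕ → Bool) (S : ℕ) (L : List (ℕ × ℕ)) : Bool :=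
  List.rec (motive := fun _ => Bool) true (fun e _ r =>
    Bool.rec (motive := fun _ => Bool) r
      (Bool.rec (motive := fun _ => Bool) false r (ih (Nat.xor S e.1)))
      (Nat.beq (Nat.land S e.2) 0)) L

/-- Backtracking search; `K` is called on the complete assignments. -/
noncomputable def hgSearch (K : ℕ → Bool) (Ls : List (List (ℕ × ℕ))) : ℕ → Bool :=
  List.rec (motive := fun _ => ℕ → Bool) K (fun L _ ih S => hgTry ih S L) Ls

/-- The parity of the block starting at `p`, read off from a predicate. -/
def hgPar (t : ℕ → ℕ → Bool) (p : ℕ) : Bool :=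
  if t p 3 || t (p + 3) 3 then true
  else if t (p + 2) 3 || t (p + 5) 3 then false
  else t (p + 2) 2 || t (p + 5) 2

/-- Parities of the central blocks differ. -/
def hgDiff (t : ℕ → ℕ → Bool) : Bool := xor (hgPar t 36) (hgPar t 42)

/-- First phase: the vertices of the two central blocks, in search order. -/
def hgOrd1 : List ℕ := [39, 36, 37, 40, 38, 41, 42, 44, 43, 45, 46, 47]

/-- Second phase: the remaining vertices, in search order. -/
def hgOrd2 : List ℕ := [48, 50, 49, 53, 52, 51, 33, 35, 34, 32, 31, 30, 29, 27, 28, 56, 54, 55, 25, 24, 26, 23, 59, 58, 57, 62]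

/-- Explicit values of `hgOrd1.map hgLevel`. -/
def hgTab1 : List (List (ℕ × ℕ)) := [
   [(16687398718132110018711107079449625895333629080911349765211262561111091607661254297806535590320, 279972364746298362786317894687752184633931186205056106080340126399124509264925465772703757649875828736),
    (33374797436264220037422214158899251790667258161822699530422525122222183215322508594166192211216, 9394314236890812508916394554673788713504643820376725570316585598595553714753811883120607729294609893055004672),
    (66749594872528440074844428317798503581334516323645399060845050244444366430645017188389794025265, 315220878248385784001990605402351544522736127226219558850181531847949739945952009577070355278979908442207555883630592),
    (133499189745056880149688856635597007162669032647290798121690100488888732861290034376951816859027, 10577057524165739899063721378221237636489768144613138162580869407099954887978683280508888870522860620400745601657994928455680),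
    (266998379490113760299377713271194014325338065294581596243380200977777465722580068753320808515771, 354907157454707676172820502656950288446793872897354243315728100190758876044531636713298521709281132894297193976925052875962478231552),
    (533996758980227520598755426542388028650676130589163192486760401955554931445160137505992653052467, 182422268058505258804536171391499177249007364354699599373579176916833720699186466958997152516680760662262702961057087125207696120217600)],
   [(994646472819573284310764496293641680200912301594695434880927953786318994025199325343210, 16687653347629211115021580141052733935948084962669378881474740886636049107606736765665039876096),
    (1989292945639146568621528992587283360401824603189390869761855907572637988050531224963518, 559944762998271734053873691241370958894767988942666385788714027321073634311784022040403349953568571392),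
    (3978585891278293137243057985174566720803649206378781739523711815145275976100360661130556, 18788628473781692028164303624770137341185577346457216671120019665238245722410202597205064015327686574590656512),
    (7957171782556586274486115970349133441607298412757563479047423630290551952200814979127220, 630441756496771568004114709986522056847200879133530745660118425315615826128642754585080675513914860510870552161812480),
    (15914343565113172548972231940698266883214596825515126958094847260581103904401910928852764, 21154115048331479798127442756709473636555306488117828566773420583650998833449580473500402075605459981816839812810722164867072),
    (31828687130226345097944463881396533766429193651030253916189694521162207808802465746244948, 10873214486748293566974173271149347856581650039833760224198053891470058005999712166726419479649112264052790579858844704938393600)],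
   [(254629497041810760783555711051172270131433549208242031329517556169297662470417194407395306, 4272039257987709341164377286911897825600204371902815151448799007019746745549192520845588793655296),
    (509258994083621521567111422102344540262867098416484062659035112338595324940834494949261248, 2195828178096431378069008406200899522217524489619702876697303299804815659699733152415042328978259968),
    (1018517988167243043134222844204689080525734196832968125318070224677190649881669308301934401, 73393079975709733466514364218153111632136698934830385305191388030926620416954761974584718954027143770669056),
    (2037035976334486086268445688409378161051468393665936250636140449354381299763337372790848965, 2462663111315513937516071048879958152348903830804370874347231246244378876879124390056580622806283697562432850362368),
    (4074071952668972172536891376818756322102936787331872501272280898708762599526674312677521745, 82633261907544842961435323268392307383006901548261061217004636416132578505240723211709770946574243454083589912398342914048),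
    (8148143905337944345073782753637512644205873574663745002544561797417525199053347326642514931, 2772712167614903720100160177007424130568353827871755833897942110354559386780715617418894846336829990724920071423313793770030366720)],
   [(4271974071841820164790043412339104229205409044713305539894083215644439451561281100046134649701223, 1093642050044853591338080585449445843353652319207120678770892545797055166860593285336470731175755776),
    (8543948143683640329580086824678208458410818089426611079788166431288878903122562200092479775230519, 36696539979310919098824734714313371811851844138161035710805523192360530142244500278519035583676120477728768),
    (17087896287367280659160173649356416916821636178853222159576332862577757806245124400184491466317477, 1231331555657756951670140255590625874924469939556619297628421838334670590885260103876194340191007460903569217028096),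
    (34175792574734561318320347298712833833643272357706444319152665725155515612490248800367578680204271, 41316630953772421480717627458405615992918466932632383903032357620191133203238475782847505330235547751283609416025126207488),
    (68351585149469122636640694597425667667286544715412888638305331450311031224980497600735342649627599, 1386356083807451860050080088503643713703101516765910248426909658154922154219380745319068556481200542465746470015728077111052730368),
    (136703170298938245273281389194851335334573089430825777276610662900622062449960995201470141655284589, 46518390941903444531323928924251788242157474934631267924565896740914279416847610548010161318279805509669980621004362953859253789020651520)],
   [(65185151242703554760590262029100101153646988597309960020356494379340201592426774955270169271, 1093625362646139344565846325800508232651570632615853052234805438813536559393805101890744087201447936),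
    (130370302485407109521180524058200202307293977194619920040712988758680403184853550267941791782, 36695980051635817623724787086409885431027240479118442718853629501799141073882192343152433325803276087590912),
    (260740604970814219042361048116400404614587954389239840081425977517360806369707099409064687731, 1231312767315974905720863784402943393361935326200100426742513453933185491775327290988133672007875140715273154199552),
    (521481209941628438084722096232800809229175908778479680162851955034721612739414197636695943515, 41316000521635702487725883837388875530168646153865738588343709719241837471789107897859695606921272968931261999332521410560),
    (1042962419883256876169444192465601618458351817556959360325703910069443225478828393928114846737, 1386334930015189707896629003879062086288809461413672604296391751033673504012585997884868161047716571550979205547193319639830495232),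
    (2085924839766513752338888384931203236916703635113918720651407820138886450957656788218445083701, 2783500601025560577235055434834518951860576696436557095402852976515871965027300493964144484522364424768465847398439648360440791040)],
   [(1093625362391505962186251113558810682676584715446606218212885303204976499599687961611757633326646404, 18347988932192611349879630030761499528973653242652811681602613564949486580846697256323021951701527535026176),
    (2187250724783011924372502227117621365353169430893212436425770606409952999199375923223514112445156748, 615656383657985265609837477502709312411597115402113603077834614535656578410993499494614494832599936429147650260992),
    (4374501449566023848745004454235242730706338861786424872851541212819905998398751846447026961289160869, 20658000260817851243858567417505612346206155145689544081151324599543102563580889431602772052149274936810532207007191007232),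
    (8749002899132047697490008908470485461412677723572849745703082425639811996797503692894053430309747183, 693167465007594853948314501930782040766753892950974731296177500201019663501099769649698050891569291594721071715393567529589800960),
    (17498005798264095394980017816940970922825355447145699491406164851279623993595007385788106483325398479, 23258840569209721010358650469943862499077994716980850635563092427710163650296022005089976269420327227690233142973660517354478421894234112),
    (34996011596528190789960035633881941845650710894291398982812329702559247987190014771576211834768509294, 46699390819535651325357207802192648711458497120682548685906271403249711385607466284143148272040364785056301510426660043507161006488944640)],
   [(279968092772225526319680285071055534765205687154331191862498637620473983897520118172609687335462321822, 4697156837379432832912417163841670956075344440098446583828779654065414102831655763169257846103619151882878976),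
    (559936185544451052639360570142111069530411374308662383724997275240947967795040236345219374247924448219, 157610439124192329877592277384985962784829526377525526265924544970126901312027088786481189925645197811520713263153152),
    (1119872371088902105278721140284222139060822748617324767449994550481895935590080472690438747226848310162, 5288528762082869949530740816806018770391560917477766402254207199023931944217065190308577997712186183595139681891741306191872),
    (2239744742177804210557442280568444278121645497234649534899989100963791871180160945380877493945229744822, 177453578727353838086410251326235399614718321952093855391462363510707876745874172792686218500758065566357315520066139041605489786880),
    (4479489484355608421114884561136888556243290994469299069799978201927583742360321890761754987464570490915, 5954354040563640900009462902304228890534165313075457968624526534170002867316332887972539371197298771292329191544770627911443705186045919232),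
    (8958978968711216842229769122273777112486581988938598139599956403855167484720643781523509973651473985641, 3060537794427443364099605127248202260528882337369495793804002544235933368253922380447958371157296724675084416321494339030428562671252642201600)],
   [(18347988927920572092886567162416695526372519913346248989900710715095383008707878464560148424881984127185455, 307828173481004794220982127026172322081489238761086634589570273943687565455966502755938705056438094985081720406016),
    (36695977855841144185773134324833391052745039826692497979801421430190766017415756929120296849762747865863822, 10329000130408888925953615084958094719540845710078186775375096140341450117822174715617038216537412975058078824321119158272),
    (73391955711682288371546268649666782105490079653384995959602842860381532034831513858240593699524033589461932, 346583732503797426974083859014053839544567445408744949990997301492648133019350315466116932917671649858256649911916357081588826112),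
    (146783911423364576743092537299333564210980159306769991919205685720763064069663027716481187399048078798637828, 11629420284604860505179325234825147346864635680879380477497929895212550314805267072963228534586850584051619879920648407454514482102927360),
    (293567822846729153486185074598667128421960318613539983838411371441526128139326055432962374798096192456417550, 390218592139194438690525316402749689021331318213646598976579283287657800956364825120147631306939024689640222530027984810327833051458694851592192),
    (587135645693458306972370149197334256843920637227079967676822742883052256278652110865924749596192489490260778, 783485766847766641986204152454271341044260881229069186733965671086943509853995753061786973480047960717683142601554327708489037752642425837322240)],
   [(71671831749689734737838152978190216899892655911508785116799651230841339877765150252188079785654005652258, 1202472150649098626023732478442983259782931372326178807205454069997704753862162214829398565494036143616794034176),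
    (143343663499379469475676305956380433799785311823017570233599302461682679755530300504376159570071565996391, 618070685290295217560918604892205682111695623356135200040683973119480066324497633742001944750804150356935083819008),
    (286687326998758938951352611912760867599570623646035140467198604923365359511060601008752319139732330951735, 20658315476886210453671503818339137878796815861448346186080320920857848792129639978913349703362013429190735925031244660736),
    (573374653997517877902705223825521735199141247292070280934397209846730719022121202017504638278232258780326, 693178041903725930025039470877202035126247590117630953336096918783192603035503807719601691986513115501599392432287403810286993408),
    (1146749307995035755805410447651043470398282494584140561868794419693461438044242404035009276556065843074547, 23259195470951722265661964462124747371839094016709297674471923547351290444523862150459002090893301440265001128691393346956787644773695488),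
    (2293498615990071511610820895302086940796564989168281123737588839386922876088484808070018553110935662690779, 780449092804757540046040321530819889724936262992894662324313755856014903260806401247844846631625045473723353594404334219294734417217899011768320)],
   [(4697085165547666455778961193578674054751365097816639741414581943064418050229216886927397996769538180253955447, 78805214846591618595263531839879103431002565945930699601357543272660730532652900376335483443775176892875867282210816),
    (9394170331095332911557922387157348109502730195633279482829163886128836100458433773854795993539074935674740837, 2644264381041425543899619197619824654609046487213443299677089530665532570722561866421972803319573423046610294889985272184832),
    (18788340662190665823115844774314696219005460391266558965658327772257672200916867547709591987078149994896482609, 88726789363676919043186337323571007010913622089682662128161721086779495397429653583888119720464853434391314993269032510103173988352),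
    (37576681324381331646231689548629392438010920782533117931316655544515344401833735095419183974156299260922340245, 2977177020281820450004731451114537766182446066547820264175328628489664361066908105764219908010414229748939015660301948987048288940279726080),
    (75153362648762663292463379097258784876021841565066235862633311089030688803667470190838367948312598534256061121, 99897483879008965125893161155944945809932046837174582638534904561501518825585457189419095099081260102506005989651990494925919913746612572873818112),
    (150306725297525326584926758194517569752043683130132471725266622178061377607334940381676735896625197105746264131, 51347303653272813647265720734550574936581333212632902743741212349195809080803598624009574351914137125966421070859635968690730568505142568786958745600)],
   [(1202453802380202612679414065556140558016349465041059773802132977424491020858679523053413887173001576769292945182, 307832870566169248262075514481403714504430431315501774644596241919412416988713526996326032766473252765899272749056),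
    (2404907604760405225358828131112281116032698930082119547604265954848982041717359046106827774346003152156504872284, 10329157736038197765416814355012113860355157902668002358683096575335333494925712210795046446389605754994750581530383351808),
    (4809815209520810450717656262224562232065397860164239095208531909697964083434718092213655548692006304564813201429, 346589020951862960202704812605100477446355999819744976806645737438551034480898069928464713256840425496433681813208998422014590976),
    (9619630419041620901435312524449124464130795720328478190417063819395928166869436184427311097384012607686013517887, 11629597735475861132830972611432528018952643088882959912405618603360079470728903050934225020423199625603281352305251147804407910396592128),
    (19239260838083241802870625048898248928261591440656956380834127638791856333738872368854622194768025215439234891967, 390224546402378770023020160765390705602776797562639496292913147289398827666512852452475177223368551216437021176299303522856968982499560320401408),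
    (38478521676166483605741250097796497856523182881313912761668255277583712667477744737709244389536050431080093352510, 13093763006989463076981068419032015947011436270464600215062073933767626931225653327917762526425645818922479027497697906533299126980298810786623646597120)],
   [(307828173409331868845930000782371982852185463050511302093346042220669701339821957901673955116288403444740127440030, 5164499757376289329680968877257530700782714560370322863222291833132418122168888505500978937492154110193232800903338131456),
    (615656346818663737691860001564743965704370926101022604186692084441339402679643915803347910232576806888219577890266, 173291866251898097830731806261200306058196189300655116418811468967274822379928074793645623439102949563752000980661469480067530752),
    (1231312693637327475383720003129487931408741852202045208373384168882678805359287831606695820465153613775955659694478, 5814710142302430252588431304792328301668549658190722314908159782559280139662372422243184464817287486748341199008601696690945358867464192),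
    (2462625387274654950767440006258975862817483704404090416746768337765357610718575663213391640930307227550460831130794, 195109296069597219345262658198912219270174915579420436217165909404838322542355963620791845182127063008360181875322781191920399641368946551029760),
    (4925250774549309901534880012517951725634967408808180833493536675530715221437151326426783281860614455100968243998206, 6546781607535167163909700386757274526643704133235083138695449576842225060729939245842942762324878316047426975674345987207589085916261638603250149097472),
    (9850501549098619803069760025035903451269934817616361666987073351061430442874302652853566563721228910202076233206268, 13144709943330620070197216085822240411309230364730439224780076600410606044618615212200261400061036327320085102985078891700105620008236549036736082083840)]]

/-- Explicit values of `hgOrd2.map hgLevel`. -/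
def hgTab2 : List (List (ℕ × ℕ)) := [
   [(78804012392788958424558080200287227610159478540930893335896586808491443542994421222828532509769831281613580226334111, 1322132111407674448962352850600529132148271145429123668243089396714775970864112762640261694200639998169987286580983817568256),
    (157608024785577916849116160400574455220318957081861786671793173616982887085988842445657065019539662563227484698388703, 44363394681838301297921393596214484112501368470021176342435261307314263694047696506324584867418000346312358985192979148263718387712),
    (315216049571155833698232320801148910440637914163723573343586347233965774171977684891314130039079325126453743110683295, 1488588510140910225002050509526412675959612195140977393979188877604654338653683142982065104384098466477124920166113104533023132288162988032),
    (630432099142311667396464641602297820881275828327447146687172694467931548343955369782628260078158650252907105897967581, 49948741939504482562946580577342040843400393066823154901246550271154852753121507742557162468190849781971575636560268423376690345981484064864993280),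
    (1260864198284623334792929283204595641762551656654894293374345388935863096687910739565256520156317300505813070825738135, 1676001664894651273853576757636098039961524895109394802636550017367696265664913541725637073001827702291925403785685209363319062391628288403419787209736192),
    (2521728396569246669585858566409191283525103313309788586748690777871726193375821479130513040312634601011624917764140742, 861464804408547101487924806159233658635211328876316138038738967684325515243403427692311414970123492015957855052763418328093623945613573987333664858020249600)],
   [(5164499756173817179311838344006023748659411585658447025661318713081295244033682389259290706560275662871806344935518214422, 86645927961449599362552825943027080193662971245677946666018846099498535437941830936707111845756367811999668439040298952473706496),
    (10328999512347634358623676688012047497318823171316894051322637426162590488067364778518581413120551325743612688662036400963, 2907355071151204797295318951714309954004466038273979829663546478141266626429687375277148051892493031068173090884769296344500658012946432),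
    (20657999024695268717247353376024094994637646342633788102645274852325180976134729557037162826241102651487225375896095973835, 97554648034798609672610671101662727060006418022191917473234216834510075707625789200417110294084032699274057937466296523350475529916962121449472),
    (41315998049390537434494706752048189989275292685267576205290549704650361952269459114074325652482205302974450751906307974497, 3273390803767583581954850193337321267735086916457701813229615369921403982370775150554166877659105075536868577121575369777585999589569351979081305948160),
    (82631996098781074868989413504096379978550585370535152410581099409300723904538918228148651304964410605948901504154964029477, 109836769134444727105020447883910334304799179283377768595851515767790607764479308394384152799161145682043948615115248286114958933659679423360666053440492797952),
    (165263992197562149737978827008192759957101170741070304821162198818601447809077836456297302609928821211897803007137949044847, 220531637976605572331633856870514264984463800622841360649007897621634426301472145035969620765286419647295768911162913343093279209692106362283913184114313789440)],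
   [(20173827172553973356686868531273530268200826506478308693989526222973809547006571833044104322501076808092994451721039586, 338465820599167468873348907975680858616179084699457121261696737835105433216726886287880556258669318627399403644769160927379456),
    (40347654345107946713373737062547060536401653012956617387979052445947619094013143666088208645002153616185987625102773415, 173971431747625040321534380980959249037728476130242359795984337077502606402363605683488977995242058251246168427571324070288949248),
    (80695308690215893426747474125094121072803306025913234775958104891895238188026287332176417290004307232371974713722512885, 5814798867737930485720182425315293411820643021871822540800085772485857432509474793172957042688075296085575109455479019669797947956002816),
    (161390617380431786853494948250188242145606612051826469551916209783790476376052574664352834580008614464743948917507551713, 195112273201189385011509918992087592000020586873096617169770142922190379057584483928582494960244431529865381556397296440962477264832271795355648),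
    (322781234760863573706989896500376484291213224103652939103832419567580952752105149328705669160017228929487897404714309028, 6546881503494731538490534209515685192290196532496676359437403141314058641907862092371305782914734431365226654671347495852532305724695343400403628720128),
    (645562469521727147413979793000752968582426448207305878207664839135161905504210298657411338320034457858975793518526234861, 219676890221071731766536012776878642458455420779819018161742867794789170832589930623595132142548767843559317899798817280656970645959900893110314829667547217920)],
   [(86645927941275464361825443254471365732388658605494267974077486894206915868925800719999200190754361815543475342543861932174172131, 1453677448929679601619011072256569018258405499790527977652278041082044420726004693060617544172413266157365829330161928230225108203995136),
    (173291855882550928723650886508942731464777317210988535948154973788413831737851601439998400381508723631086950685087724176867073962, 48777324017399131544459781841804548389282991688786826781908526589815308705202173907497772730579564360725450671161405594939697951625333086093312),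
    (346583711765101857447301773017885462929554634421977071896309947576827663475703202879996800763017447262173901370175447092267081471, 1636695401883791790977078512977553531034772636544606592902624674423411794323190712585865149499671338746783913213386549492299971668131335575376024829952),
    (693167423530203714894603546035770925859109268843954143792619895153655326951406405759993601526034894524347802740350893698667846909, 54918384567222363552510223941261999770185383976184818184144914658091297635494686788279777406532380218978360081981328239038432273690116365133074551454365122560),
    (1386334847060407429789207092071541851718218537687908287585239790307310653902812811519987203052069789048695605480701785939736745719, 1842755200510712226701982738565106603263825667459954033330617583963628869235946484463196118488531159915118647408689385389780466861138112176477340282438690817685061632),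
    (2772669694120814859578414184143083703436437075375816575170479580614621307805625623039974406104139578097391210961403571904723158247, 3699906925167314633811444849629701854725585827230344041342305684104047043095879295251790097017295564289324930908665008346358053449313761935011464815133611137213399040)],
   [(338460656020607282663380637712778772392143197677711984273740183180495765112991409062496875745134225841966700556812412978830358, 86647250073386872031577320441774299805741845683061023042994364885786990903482082889697422402219345568614247333060905197409140736),
    (676921312041214565326761275425557544784286395355423968547480366360991530225982818124993751490268451683933401113624179973084227, 2907399433192043971165912921753541850828224209674241394356699884360489867277717726486369576291164093942060967483800166489012467870466048),
    (1353842624082429130653522550851115089568572790710847937094960732721983060451965636249987502980536903367866802227248621015694539, 97556136600594691151912416108918545673491881236836291080671851823522087090416880651618025663899059866691648095558213896468448849214617740640256),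
    (2707685248164858261307045101702230179137145581421695874189921465443966120903931272499975005961073806735733604454495826216711778, 3273440751747365769245264397072755821904217390416706535126542358156459182570971325118357091766932240573761957294093624206058728967180227681389503315968),
    (5415370496329716522614090203404460358274291162843391748379842930887932241807862544999950011922147613471467208908991803035902760, 109838445110535865883268006388433905859054161908147758564374950980904485671954854421925349322009609137651582474378605948977038640121250310422746166221391003648),
    (10830740992659433045228180406808920716548582325686783496759685861775864483615725089999900023844295226942934417817982958367615354, 3685566637447208195341236258136452790312277620793912108607483029452621593519261105497070228504083468645248885217591114062114618432928784622304663725335647865242910720)],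
   [(1322111937580497197903830616065542079656809365928562438569297590548811582472622691650378420879430569695182424050773928082368, 22181696013622618287922369642740806964344089033431820472826651315993486854796926467172400740130084587537481424223066999847225655296),
    (2644223875160994395807661232131084159313618731857124877138595181097623164945245383300756841758861139390364848101175556010816, 744294255070452457948307571384707182284003759117134800071126344969253781875996118589052926431003154098157250164123412853916428353815969792),
    (5288447750321988791615322464262168318627237463714249754277190362195246329890490766601513683517722278780729696201234211559874, 24974370969752241281468001841234683169712421074114328189905951304370848444929991285368990382314566937355483844609635435181108223395084693418278912),
    (10576895500643977583230644928524336637254474927428499508554380724390492659780981533203027367035444557561459392401316744990024, 838000832447325636926788378807472125110550568966994503579672043154023534087314209642553907075931016015690030314909120356970183299646090156798003097108480),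
    (21153791001287955166461289857048673274508949854856999017108761448780985319561963066406054734070889115122918784801377478846426, 28118641948297181666116609635440466213611134854627660233110769136181591671453638110856025911359431756135327555199658465493626386661824386254468908691781396201472),
    (42307582002575910332922579714097346549017899709713998034217522897561970639123926132812109468141778230245837569602285459175311, 14452981099959946967836835864691593485393205670204993132161740028456948983549871881534290148219395372226000381116903266188785597158331183317478159394615059913113600)],
   [(59285549689505892056868344324448208820874232148807968788202283012051575623212685, 994661649920297331513260611358447905537371931235157184688731484808686322427197501997056),
    (118571099379011784113736688648896417641748464297615937576404566024103204493990824, 33375308692352279070250611975274739199564933117787026511950136859480955261694432618642053005312),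
    (237142198758023568227473377297792835283496928595231875152809132048206568730678009, 1119889525996547462234753586338170608352755149987770120568276623799696309710157072377506733854275141632),
    (474284397516047136454946754595585670566993857190463750305618264096412517177817325, 37577256947563384056336564420850399544668250032277747730023767072893132336654827272002737254733732969216737280),
    (948568795032094272909893509191171341133987714380927500611236528192825372528274120, 1260883512993543136008229419988958456310946136004795346663798128584086825457190303415084008908597229827454078961057792),
    (1897137590064188545819787018382342682267975428761855001222473056385649560551211098, 648094087049263332305799321600755921398499610414133085262659424034956574797613153858567445257253185752200518838098329600)],
   [(3885337784451458141838923813647037813284813678104279042503624819477808571405209497000, 65185151257880887065282245028049244442675747431269469990420665670248064958679980152293687296),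
    (7770675568902916283677847627294075626569627356208558085007249638955617141606188239097, 2187250855662573434336470787907235946120455293602850599220611423361250226133000394293810923445420032),
    (15541351137805832567355695254588151253139254712417116170014499277911234281798707469037, 73391960103271895988039003873046838841553647887712742492110339041542142139394717871435503483287998480515072),
    (31082702275611665134711390509176302506278509424834232340028998555822468563754454421704, 2462625534631949811442249049984745712886371979347809469005090577557196466433352702728491759712771950300411105116160),
    (62165404551223330269422781018352605012557018849668464680057997111644937126880515666520, 82632001043271404975451767675820713418055144632677591103100284995655626297747254245571384492380414697586250635814268567552),
    (124330809102446660538845562036705210025114037699336929360115994223289874254074875057928, 165909564556214843823615040471227106562887233283314531767538367302171705068784981606253652842185761020688167059328535101440)],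
   [(15177100720513508366558296147058741458143803430094840009779784451085190540256627084, 3885397070905773344897513458738010581874008832440099605672729928319082996994613968896),
    (30354201441027016733116592294117482916287606860189680019559568902170379693580934308, 130372299549147353654720172906114938668948767521843861455030560109806466123830049776156540928),
    (60708402882054033466233184588234965832575213720379360039119137804340759624411420140, 4374568460924013463647029651293343998917144473482989389013730766232408309993431685840172705294319616),
    (121416805764108066932466369176469931665150427440758720078238275608681518861059867076, 146786159951419468970064583353993782541090478348992519041730835809968643002457880381141938138382655236866048),
    (242833611528216133864932738352939863330300854881517440156476551217363036558830814541, 4925326222631027875032146171831626140058451983228985143721380020149503857209725571376667675171747413521026963734528),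
    (485667223056432267729865476705879726660601709763034880312953102434726071826818125801, 165266523815089685922870646536792762909433473817810763949033147713813745187563634957009246727039217396075729812581169233920)],
   [(231584178474632390847141970017375815706539969331281128078915168016251760464217, 3885337785356097642498150171521261003176912512258855699921886066809181270520685920256),
    (463168356949264781694283940034751631413079938662562256157830336031829510485003, 130370310286436881681470321888162848122147041177919542743004049263075007565796398776400740352),
    (926336713898529563388567880069503262826159877325124512315660672063836012895266, 4374501711325162410023153059068133761975386612875028997189422788711913951599283091511458366113185792),
    (1852673427797059126777135760139006525652319754650249024631321344127103489938535, 146783920206543791976109090446516615920446633061636058628862534615826396133503478928118453008697745221877760),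
    (3705346855594118253554271520278013051304639509300498049262642688253600883948855, 4925251069263899622884498100031656826618620433370923465675132572391964572533801451061450510762954634284153618563072),
    (7410693711188236507108543040556026102609279018600996098525285376506482991740838, 9888980660212924708343448667003339920216037826735647426100871998201114241408406591788152029644594253342638436515840)],
   [(904625697166532776746648320380374280103671755200316906558262375192600866669, 15177332308225677128505911948195353835445347001719139084659101282496417957010210816),
    (1809251394333065553493296640760748560207343510400633813116524750515981274697, 7801148804618774257125609516808493716473281017512785512825613309235051174893744816128),
    (3618502788666131106986593281521497120414687020801267626233049500324789545693, 260744599159003106573047021108469009334870843498884999097212002648854750990476112713824075776),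
    (7237005577332262213973186563042994240829374041602535252466099000727083335833, 8749136921848027048710857829689608963792948624431641044719865072367706477788560413190241941117206528),
    (14474011154664524427946373126085988481658748083205070504932198001686679405003, 293572319902838937940129409541584619287160157157718249781213999995559683871848915301362733553156102509559808),
    (28948022309329048855892746252171976963317496166410141009864396002971385382242, 9850652445262055750064292343663737947311012376416371104063579303849562715742804703534200592460585677389844048773120)],
   [(3533694129556768659166595001485837031654967793751237916243212723358907453, 59286454315203269214228428087141985031209703161427806895299642372649092818927616),
    (7067388259113537318333190002971674063309935587502475832486425767491482809, 1989323418876664583101905106024428558323677368032159001347430757253226951461698568978432),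
    (14134776518227074636666380005943348126619871175004951664972850298280713773, 66750617384704796209022616525779402753874966501460678611295021998864192349324051879495783677952),
    (28269553036454149273332760011886696253239742350009903329945700184989555336, 2239779051993094924469981457045698138753667475716933472753987733894177218476225571155711248799188910080),
    (56539106072908298546665520023773392506479484700019806659891399135263494041, 75154513895126768112673128842649367827829488277721127668845541988854815093111413920824766690051390518394355712),
    (113078212145816597093331040047546785012958969400039613319782797864915021515, 38629417839602430600273568725630993926435685778506582096973623277840410160876104465637650803163837537300617625600)],
   [(13803492693581127574869511724554050904902217944340773110325278587857486, 231584178528553106933721910209730923365170509353807908291929129767965154082816),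
    (27606985387162255149739023449108101809804435888681546220650787315973866, 7770676033880524735538382642755678184160413812274905606687310294096172306883120463872),
    (55213970774324510299478046898216203619608871777363092441301165541096639, 260740620572874689699599329177625999568425811104478180240954326910490629172282403201547763712),
    (110427941548649020598956093796432407239217743554726184882601103809639997, 8749003422650324820048158791453636641529001776077512420944126523484372862190215523726847947162255360),
    (220855883097298041197912187592864814478435487109452369765201824336503480, 293567840413087583952218180896738578475631501279528347592063699507234369071352568332043320582089104311713792),
    (441711766194596082395824375185729628956870974218904739530402498824677416, 589429179442699236175027410209377999318601955576875652438454151046342506492638980852851392605578556856074240)],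
   [(210624583337114373395836055367340864637790190801098222558803585634, 3533748049450115514649655108877538742495161483372915202099063537874763776),
    (421249166674228746791672110734681729275580381602196445167788801830, 118572915725509201473111218573118958373288951398858964523519918754889187303882752),
    (842498333348457493583344221469363458551160763204392890486122495348, 3978646837753343356193460018979275390736756712285320676046313166550647756417039148777472),
    (1684996666696914987166688442938726917102321526408785780324368037981, 133501234769409592418073502602916845008949486954029409453510506981264187006725404927474930810880),
    (3369993333393829974333376885877453834204643052817571560904128473367, 4479558103986189848939962914147935380210249917371340255072447180083681052512610788394496839645587832832),
    (6739986666787659948666753771754907668409286105635143120375410883397, 2302492728209640419499490781166016693498831139713918095646716551651979098372227219679215598294963689881600)],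
   [(53919893334301279589334030174039261347274288845081144962694921912406, 13803703321378340777760888111693342430449180939575980196113142740156416),
    (107839786668602559178668060348078522694548577690162289924778033611011, 463175451944932183517949556894119704498353824539847286185898270040462656012288),
    (215679573337205118357336120696157045389097155380324579849919659836170, 15541589209973997269454420871047318538121631354027092403007269063523694931893116993536),
    (431359146674410236714672241392314090778194310760649159698731074259232, 521489198318006220383099188190079269635257042910554471297256056807500510083947206329717751808),
    (862718293348820473429344482784628181556388621521298319396336435534690, 17498273843696054097421730133389509873816976377828016864133715629312973253241116720519228789398437888),
    (1725436586697640946858688965569256363112777243042596638791494755373608, 587144639805677875880258819083198186594904206777594751361821848383519811376500410052192246464525799595704320)],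
   [(1453677448591213781098647615776009068707282721374636120562980398361278576226795846652382101427527131121525043212532355867070121177028337, 24388660555022203487156098465640065838229212885573642635115441587290332968115057552491681631970118607587616509691261984894984368961798459621376),
    (2907354897182427562197295231552018137414565442749272241125960796722557152453591693304764202855054262243050086425064711734138961250600149, 818347700941892988133815363272832738109452836688981370874664242839074834253857195315654152619843156465792802607419872529911819509175764257334091579392),
    (5814709794364855124394590463104036274829130885498544482251921593445114304907183386609528405710108524486100172850129423468277377725714048, 27459192283611181776249297261183218741733084034198358444151401129731255130307744394246978160028277979163963017306240232327006961470119733316567849793467973632),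
    (11629419588729710248789180926208072549658261770997088964503843186890228609814366773219056811420217048972200345700258846936554220636597120, 921377600255356113350991369270923882736350547011391550596127008520363848150983627099316093981313553927927246421178451833247410557070199322972460493852997804055592960),
    (23258839177459420497578361852416145099316523541994177929007686373780457219628733546438113622840434097944400691400517693873107936340329088, 30916302034091529341220132033178323545983508209319820167258970619555937683007229134279685330243680792626487213203422095591591085110156113816990457023974922605518898973376512),
    (46517678354918840995156723704832290198633047083988355858015372747560914439257467092876227245680868195888801382801035387746215457393690496, 62074137663427873751415513514325028032331774149982163735912792400241363716180875646367056844320123417923890860039749116668651876058682035756265307679896662909034833788272640)],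
   [(22181357552966518876627313473144669627491496603006532601363836644916970462445004984319795248833116624779129687691228575577504646243, 372147105266885609502023786728105350455105080037116873345834859685106983556088671475868276455722297223387233950178027238908871819642535936),
    (44362715105933037753254626946289339254982993206013065202727673289833940924890009968639590497666233249558259375382457149901697420587, 12487185484876076104729672959556651493930104411520139841910102052839684057350472096730156182165049012986069387969533948107332364440494949449859072),
    (88725430211866075506509253892578678509965986412026130405455346579667881849780019937279180995332466499116518750764914299341994108801, 419000416223662818463305463978791986229829946243368092736941164718911468463854568672753191346014069454471421245526289377287451783275589239772243654868992),
    (177450860423732151013018507785157357019931972824052260810910693159335763699560039874558361990664932998233037501529828597299786020485, 14059320974148590833058304817542782256958730774482163657368931077156374100466233355042409690656823056794691027639778332598885870777755178116073966328857944391680),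
    (354901720847464302026037015570314714039863945648104521621821386318671527399120079749116723981329865996466075003059657194845011960721, 471752529593242649003678241041465956806456149461216855305509725723851978695778720571663491616474040209941715624336593201815116512324946682258655846406293908853675261952),
    (709803441694928604052074031140629428079727891296209043243642772637343054798240159498233447962659731992932150006119314388227320425141, 242480785757945621627943648058477637288634656461453934056794059393268379797996647328827197223348811549236009210080607347954752741214308462052927655445886097015248099737600)],
   [(5678427533559428832416592249125035424637823130369672345949142181098744438385921275985867583701277855943457200048954515106007347822887, 95269658970503735124828587671739619809013857338221024036342578968766950695092489864502170765575640841144503381798862694151342948500830683136),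
    (11356855067118857664833184498250070849275646260739344691898284362197488876771842551971735167402555711886914400097909030212282968245110, 48968604699482238081543142824530698130277221997432509030571570618441001327192434508511634238080829606646857376840193251036931181141281564786688),
    (22713710134237715329666368996500141698551292521478689383796568724394977753543685103943470334805111423773828800195818060423171731032676, 1636720375873682861908923418141205967170038765756749612099305083163223935886735536738416366056777929580416985495168795115252803528225072192153553207296),
    (45427420268475430659332737993000283397102585042957378767593137448789955507087370207886940669610222847547657600391636120846558892203820, 54919222555267932941633957766799392139344586469977415548429588475940277501176621251316902493705643857469968290105784257527875804567839590739850877264711385088),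
    (90854840536950861318665475986000566794205170085914757535186274897579911014174740415773881339220445695095315200783272241692664563195268, 1842783318723604097670618129068135540321017230031967105350368457596046431487291734885196721450808766577954331914464337784872756305660482648029463743868180688659283968),
    (181709681073901722637330951972001133588410340171829515070372549795159822028349480831547762678440891390190630401566544483383969462753421, 61833547558845500490210114409787025936871789096025554931123202001460994240736843727323134590782365235490567921054733120300734370206827732225883761127320836735119205618155520)],
   [(3213876088517980551083924184682325205044405987565856519208974, 53920716099134143663128469186302118868942113045218672641066963828736),
    (6427752177035961102167848369364650410088811975131983887024171, 27715248068527295747023265153105220251721906583642811173808742741311488),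
    (12855504354071922204335696738729300820177623950262581296611459, 926350904105543927517796806755502136833764991404240870655016247244101460688896),
    (25711008708143844408671393477458601640355247900525401207423370, 31083178419947994970267962705497698166087689573201803642347816038578779106375408549888),
    (51422017416287688817342786954917203280710495801050418745820320, 1042978396636012440766199239098400466073571227659464887626988627273617580726213259727908896768),
    (102844034832575377634685573909834406561420991602099686484561378, 34996547687392108194843460266780745184117806361770317039598336719484317980796123150121703533203947520)],
   [(12554203470773361527671578846415332832204710889262270677124, 210627797213203639665225452713819667249629585943991851931754561536),
    (25108406941546723055343157692830665664409421778858743005581, 7067496521801304905003977928943571947413024389675793917388911173039030272),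
    (50216813883093446110686315385661331328818843556521067709607, 237145831451019248735514880357937538071677488820869962933439801129737362648072192),
    (100433627766186892221372630771322662657637687111651903770101, 7957293675506686712388605034525206387576430258395040598720938383416186988754594619719680),
    (200867255532373784442745261542645325315275374223531159103968, 267002469538819184836147005209203683150425548396786466543224285845975938589132475161224415281152),
    (401734511064747568885490523085290650630550748446644861271457, 137239261162855650156706022093654673904110857231254464128417763212441152237190438489867186444697600)],
   [(822752278660603021077484591278675252491367932816790158589245167, 13803492696795052703244799984081442556689411959279054897542543993470976),
    (1645504557321206042154969182557350504982735865633580544093430989, 463168384664089961978100695774297606000924933688336944978672879582415360622592),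
    (3291009114642412084309938365114701009965471731267160669420056169, 15541352067761104685044248651124596570040333932905088677463193351655639956729555320832),
    (6582018229284824168619876730229402019930943462534320082539694908, 521481241145749379399309086290218629928171740536541487034805209844373039137733907921722408960),
    (13164036458569648337239753460458804039861886925068639694713020853, 17498006845300649640096317583128129152991265134783288692954999179079196993789229889633853470211571712),
    (26328072917139296674479506920917608079723773850137277978326934816, 35132716860932066212596142900549054105198499892763832356837639274975210815229355147650920904015216640)],
   [(49039857307708443467467104868809893875799652108679566567, 822752278852167886688995360379305038254822013335171633812340736),
    (98079714615416886934934209737619787751599304416163430070, 27606987039094565032607358442205047965104873996277865468184523557568512),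
    (196159429230833773869868419475239575503198608329228123171, 926336769328183214965119877524649892451783057028358499852609238127210137649152),
    (392318858461667547739736838950479151006397216248671663209, 31082704135522209370095079320086159105787977012189715327906919112466158815487260098560),
    (784637716923335095479473677900958302012794431267989577021, 1042962482291498758798618172593601295530275412486987632093131493275117694961382740118137208832),
    (1569275433846670190958947355801916604025588862146452789177, 2094073108490232599532374316486659890723139041230906984617569403348875690414271065452749783040)],
   [(24388660549343689307668728357759111763660922989570087116087163747073216709529418907189891430183531024686147899385989241370687309994451212224625, 409173826082287392699971089675311962822192562091252286396140948445352770917987433410584280942795185425116681108256395633171890074695788505535103369216),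
    (48777321098687378615337456715518223527321845979140174232174327494146433419058837814379782860367062049372295798771978482741374619988913907718485, 13729596141805542110806457253746781779133721882943765279140350929587611734441160998964917899800074522148402460590046404126797056858455778910373638591240732672),
    (97554642197374757230674913431036447054643691958280348464348654988292866838117675628759565720734124098744591597543956965482749239977862265244671, 460688800127678056675398129999079276405304165187897246462951993456145289272281174175070709938076985764477306957358530525640378426087876311714455194640567582706368512),
    (195109284394749514461349826862072894109287383916560696928697309976585733676235351257519131441468248197489183195087913930965498479955827879912446, 15458151017045764670610066016394052500226424178928270504926151585379984679020252924308679561000797457976483845493337860951987788356647061204562731756838416406166359097999360),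
    (390218568789499028922699653724145788218574767833121393857394619953171467352470702515038262882936496394978366390175827861930996959911965808094203, 518689477147192951527987858669151900648851249665531836027259878021943790590351812747303285197529565292945783297151864436912771418567472915228233367429944455136073360158515991150592),
    (780437137578998057845399307448291576437149535666242787714789239906342934704941405030076525765872992789956732780351655723861993919822662737740786, 1041431215593064738348228375980750089504485158577467157144775875262007811200929245788239727961437083729167388519312639516159172953441737189202586420252085171304065757989948348170240)],
   [(95268205270873786358080970147496530326800480428008152797215483387004752771599292606210513399154418065180265231976520474104247304715386489828, 24389032696448956191956118443965342671107547478584582153303700216004339377943677405312555715987364055332992865740508849702743794816212654882816),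
    (190536410541747572716161940294993060653600960856016305594430966774009505543198585212421026798308836130360530463953040948208494609480379278253, 818360187746305031769395232041551083698555027082858568245016327737526573760327069517639209447583039963176866557528711159458279773955846336568767807488),
    (381072821083495145432323880589986121307201921712032611188861933548019011086397170424842053596617672260721060927906081896416989219109577452295, 27459611277633966089744180513613331011700649101474391700106254830127371228741913634736346871269631588603445135721313832108341179398594132783353667326297767936),
    (762145642166990290864647761179972242614403843424065222377723867096038022172794340849684107193235344521442121855812163792833978437566099964182, 921391659361802048835308302388471030590486225637488615777761666651960838737180428883533957587838227415846871516255405337944798394408431467194077975659552085280555008),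
    (1524291284333980581729295522359944485228807686848130444755447734192076044345588681699368214386470689042884243711624327585667956875372058362691, 30916773779422750245105057204891988677242415407967999031357887292675711727091494691183680598272052051571920664664661719313771765055427940050242287595045142940665557536473088),
    (3048582568667961163458591044719888970457615373696260889510895468384152088691177363398736428772941378085768487423248655171335913750364180400587, 1037394783441023672352360974837709448140500369970465476599319082590143415951598026371545330826627350546716123974206205381639405487583913538343812651325465179205829698404208680632320)],
   [(372141426839350727961253789638658321589064376671906846864122981980487315514059736743009817965446945567110411062408283101969716480466782872, 6243592368837277517907105507075356735340996230479997801367714141266731846228947756503680861645367416532967875624670001441057746834455868186034176),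
    (744282853678701455922507579277316643178128753343813693728245963960974631028119473486019635930893891134220822124816566203939432308038016969, 209500208111830662041488344851841206350388050614626274477931634722534792801925258068814723981918374941454091112952672466729506262008902913829366820503552),
    (1488565707357402911845015158554633286356257506687627387456491927921949262056238946972039271861787782268441644249633132407878864856412643163, 7029660487074295416527663843152412572046882651393375059355693099780756991295276291209613605901408782276669200063183590561257072657599748202934722602366530486272),
    (2977131414714805823690030317109266572712515013375254774912983855843898524112477893944078543723575564536883288499266264815757729334323486226, 235876264796621324501839120517755847165964129289334547827028548370565154060327697703951196540642702297624799023974531278131349613386486618371846005075976766375203962880),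
    (5954262829429611647380060634218533145425030026750509549825967711687797048224955787888157087447151129073766576998532529631515457533141572152, 7914694087532224062746894644452739313988585014039118804301282658569820998606477883234441878163774130994877510440069880850983801792442292676736837004821216668322422263625285632),
    (11908525658859223294760121268437066290850060053501019099651935423375594096449911575776314174894302258147533153997065059263030913858790198953, 4068152518510777410306282219305059951961077976539608325720590201957692553841026119511556914490723254704827161495511726887824044965944555358489770707789207361021772662887258521600)],
   [(409173825987017733751648712103449894027080255755383098685411421012016724550584319360408761540738019643860835515945008876152157068235674132600295351670, 6864797661728969361404238165238078667651894207798351319361918258512547633889593455614989167581958469637234384156336932919181564911427378047679624807664582656),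
    (818347651974035467503297424206899788054160511510766197370822842024033449101168638720817523081476039287721671031890017752304314136471348263935796850787, 230344400063838209990095867540876567213390744914074265941437961861492152992853997370410204027212207074180532136250695972058565611078594029227583175351181480036401152),
    (1636695303948070935006594848413799576108321023021532394741645684048066898202337277441635046162952078575443342063780035504608628272942696527375747027241, 7729075508522882335303396312990632821375491525057032689714181591844336045503544071868783115904464214799560905921906856071262167176216335862916745122806844697662609101422592),
    (3273390607896141870013189696827599152216642046043064789483291368096133796404674554883270092325904157150886684127560071009217256545885393054363465659261, 259344738573596475763993929331302559911638767357502242767575109196662445036613451685758367669695555124722392396352355854169464754621752781594169136234537589144196738520700430581760),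
    (6546781215792283740026379393655198304433284092086129578966582736192267592809349109766540184651808314301773368255120142018434513091770786107562846132856, 8702165395025519941462582350269833973996317567508555367905920861707803714593099878453060633268556183305854682665509014460803939247932903672933760503779542991820212155225217022987570511872),
    (13093562431584567480052758787310396608866568184172259157933165472384535185618698219533080369303616628603546736510240284036869026183541572213832459964266, 17472316453147415217251710681158256093636080474248419228323848130859761642205209357306388175790269624134326777344428324692737935021249968238484660131236007369365312900001089266095321251840)]]

theorem hgOffs_spec : ∀ j < 6, ∀ c < 7, ∀ o ∈ hgOffs j c,
    o ∈ hgBall c (18 + j) ∧ o ≠ 18 + j ∧ o < 36 + j ∧ j < o := by decide +kernel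

theorem hgTab1_eq : hgTab1 = hgOrd1.map hgLevel := by decide +kernel

theorem hgTab2_eq : hgTab2 = hgOrd2.map hgLevel := by decide +kernel

theorem hgSearch_true :
    hgSearch (fun S => hgDiff (fun i c => Nat.testBit S (8 * i + c)) ||
      hgSearch (fun _ => false) hgTab2 S) hgTab1 0 = true := by
  decide +kernel

theorem hgTag_testBit (k c i : ℕ) (hi : 40 ≤ i) : (hgTag k c).testBit i = false := by
  unfold hgTag
  apply Nat.testBit_lt_two_pow
  refine lt_of_lt_of_le (Nat.mod_lt _ (by decide)) ?_
  exact Nat.pow_le_pow_right (by norm_num) hi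

/-- `S` represents the restriction of `y` to the vertices satisfying `P`. -/
def hgRep (y : ℕ → ℕ) (P : ℕ → Prop) (S : ℕ) : Prop :=
  ∀ p c, 5 ≤ p → c < 8 → (S.testBit (8 * p + c) = true ↔ P p ∧ y p = c)

theorem hgRep_step (y : ℕ → ℕ) (hy : hgValid y) (P : ℕ → Prop) (S k : ℕ) (hS : hgRep y P S)
    (hk : ¬ P k) :
    hgRep y (fun p => P p ∨ p = k)
      (Nat.xor S (Nat.xor (Nat.pow 2 (8 * k + y k)) (hgTag k (y k)))) := by
  intro p c hp hc
  have h1 := hS p c hp hc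
  have hb : (Nat.xor S (Nat.xor (Nat.pow 2 (8 * k + y k)) (hgTag k (y k)))).testBit (8 * p + c)
      = (S.testBit (8 * p + c) ^^ decide (8 * k + y k = 8 * p + c)) := by
    change (S ^^^ (2 ^ (8 * k + y k) ^^^ hgTag k (y k))).testBit _ = _
    rw [Nat.testBit_xor, Nat.testBit_xor, hgTag_testBit _ _ _ (by omega), Nat.testBit_two_pow]
    simp
  rw [hb]
  have hyk := (hy.1 k).2
  by_cases hpk : p = k
  · subst hpk
    have : S.testBit (8 * p + c) = false := by
      rw [← Bool.not_eq_true, h1]; tauto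
    rw [this]
    simp
  · have : ¬ (8 * k + y k = 8 * p + c) := by omega
    simp [this, h1, hpk]

theorem hgMask_testBit (k c i : ℕ) (h : (hgMask k c).testBit i = true) :
    ∃ o ∈ hgOffs (k % 6) c, i = 8 * (6 * (k / 6) - 18 + o) + c := by
  have key : ∀ (os : List ℕ) (S : ℕ),
      (os.foldl (fun S o => Nat.lor S (Nat.pow 2 (8 * (6 * (k / 6) - 18 + o) + c))) S).testBit i
        = true → S.testBit i = true ∨ ∃ o ∈ os, i = 8 * (6 * (k / 6) - 18 + o) + c := by
    intro os
    induction os with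
    | nil => intro S h; exact Or.inl h
    | cons o os ih =>
      intro S h
      rcases ih _ h with h | ⟨o', ho', h⟩
      · change (S ||| 2 ^ (8 * (6 * (k / 6) - 18 + o) + c)).testBit i = true at h
        rw [Nat.testBit_or, Nat.testBit_two_pow, Bool.or_eq_true, decide_eq_true_eq] at h
        rcases h with h | h
        · exact Or.inl h
        · exact Or.inr ⟨o, by simp, h.symm⟩
      · exact Or.inr ⟨o', by simp [ho'], h⟩
  rcases key _ _ h with h | h
  · simp at h
  · exact h

theorem hgOffs_lt (j c o : ℕ) (h : o ∈ hgOffs j c) : j < 6 ∧ c < 7 := by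
  have hl : hgOffTab.length = 6 := by decide
  have hc : ∀ L ∈ hgOffTab, L.length = 7 := by decide
  unfold hgOffs at h
  rcases lt_or_ge j 6 with hj | hj
  · refine ⟨hj, ?_⟩
    by_contra hcc
    have h7 : (hgOffTab.getD j []).length = 7 := by
      rw [List.getD_eq_getElem _ _ (by omega)]
      exact hc _ (List.getElem_mem _)
    rw [List.getD_eq_default _ _ (by omega)] at h
    simp at h
  · rw [List.getD_eq_default hgOffTab _ (by omega)] at h
    simp at h

theorem hgMask_land (y : ℕ → ℕ) (hy : hgValid y) (P : ℕ → Prop) (S k : ℕ) (hk : 22 ≤ k)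
    (hS : hgRep y P S) : Nat.land S (hgMask k (y k)) = 0 := by
  apply Nat.eq_of_testBit_eq
  intro i
  change (S &&& hgMask k (y k)).testBit i = _
  rw [Nat.testBit_and, Nat.zero_testBit, ← Bool.not_eq_true, Bool.and_eq_true]
  rintro ⟨h1, h2⟩
  obtain ⟨o, ho, rfl⟩ := hgMask_testBit _ _ _ h2
  have hyk := (hy.1 k).2
  have hs := hgOffs_spec (k % 6) (Nat.mod_lt _ (by norm_num)) (y k) (by omega) o ho
  have := (hS _ _ (by omega) (by omega)).1 h1
  exact hy.2 k (y k) o (by omega) ho rfl this.2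

theorem hgTry_elim (ih : ℕ → Bool) (S : ℕ) (L : List (ℕ × ℕ)) (h : hgTry ih S L = true)
    (e : ℕ × ℕ) (he : e ∈ L) (h0 : Nat.land S e.2 = 0) : ih (Nat.xor S e.1) = true := by
  induction L with
  | nil => simp at he
  | cons a L IH =>
    have hstep : hgTry ih S (a :: L) = Bool.rec (motive := fun _ => Bool) (hgTry ih S L)
      (Bool.rec (motive := fun _ => Bool) false (hgTry ih S L) (ih (Nat.xor S a.1)))
      (Nat.beq (Nat.land S a.2) 0) := rfl
    rw [hstep] at h
    rcases List.mem_cons.1 he with rfl | he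
    · rw [h0] at h
      change Bool.rec (motive := fun _ => Bool) false (hgTry ih S L) (ih (Nat.xor S e.1)) = true at h
      cases hi : ih (Nat.xor S e.1)
      · rw [hi] at h; exact h
      · rfl
    · apply IH _ he
      cases hb : Nat.beq (Nat.land S a.2) 0
      · rw [hb] at h; exact h
      · rw [hb] at h
        cases hi : ih (Nat.xor S a.1)
        · rw [hi] at h; exact absurd h (by simp)
        · rw [hi] at h; exact h

theorem hgSearch_sound (y : ℕ → ℕ) (hy : hgValid y) (K : ℕ → Bool) (vs : List ℕ) :
    ∀ (P : ℕ → Prop) (S : ℕ), (∀ k ∈ vs, 22 ≤ k ∧ ¬ P k) → vs.Nodup → hgRep y P S →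
      hgSearch K (vs.map hgLevel) S = true →
      ∃ TT, hgRep y (fun p => P p ∨ p ∈ vs) TT ∧ K TT = true := by
  induction vs with
  | nil =>
    intro P S _ _ hS h
    exact ⟨S, by simpa using hS, h⟩
  | cons k vs ih =>
    intro P S hP hnd hS h
    have h' : hgTry (hgSearch K (vs.map hgLevel)) S (hgLevel k) = true := h
    have hyk := hy.1 k
    have hk := hP k (by simp)
    have h2 := hgTry_elim _ _ _ h'
      (Nat.xor (Nat.pow 2 (8 * k + y k)) (hgTag k (y k)), hgMask k (y k))
      (by
        unfold hgLevel
        refine List.mem_map.2 ⟨y k, ?_, rfl⟩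
        have : y k = 1 ∨ y k = 2 ∨ y k = 3 ∨ y k = 4 ∨ y k = 5 ∨ y k = 6 := by omega
        simpa using this)
      (hgMask_land y hy P S k hk.1 hS)
    rw [List.nodup_cons] at hnd
    obtain ⟨TT, hTT, hK⟩ := ih _ _ (fun l hl => ⟨(hP l (by simp [hl])).1, by
      rintro (h | h)
      · exact (hP l (by simp [hl])).2 h
      · exact hnd.1 (h ▸ hl)⟩) hnd.2 (hgRep_step y hy P S k hS hk.2) h2
    refine ⟨TT, ?_, hK⟩
    have : (fun p => P p ∨ p ∈ k :: vs) = (fun p => (P p ∨ p = k) ∨ p ∈ vs) := by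
      funext p
      simp [or_assoc]
    rw [this]
    exact hTT

/-- The parity of two consecutive blocks of an admissible coloring is different. -/
theorem hgValid_diff (y : ℕ → ℕ) (hy : hgValid y) :
    hgDiff (fun i c => decide (y i = c)) = true := by
  have h := hgSearch_true
  rw [hgTab1_eq, hgTab2_eq] at h
  obtain ⟨S, hS, hK⟩ := hgSearch_sound y hy _ hgOrd1 (fun _ => False) 0
    (by simp only [not_false_eq_true, and_true]; decide) (by decide)
    (by intro p c _ _; simp) h
  rw [Bool.or_eq_true] at hK
  rcases hK with hK | hK
  · rw [← hK]
    have ht : ∀ p ∈ hgOrd1, ∀ c < 8, decide (y p = c) = S.testBit (8 * p + c) := by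
      intro p hp c hc
      have h5 : ∀ p ∈ hgOrd1, 5 ≤ p := by decide
      have := hS p c (h5 p hp) hc
      rw [Bool.eq_iff_iff, this]
      simp [hp]
    unfold hgDiff hgPar
    simp only [Nat.reduceAdd]
    rw [ht 36 (by decide) 3 (by decide), ht 38 (by decide) 3 (by decide),
      ht 38 (by decide) 2 (by decide), ht 39 (by decide) 3 (by decide),
      ht 41 (by decide) 3 (by decide), ht 41 (by decide) 2 (by decide),
      ht 42 (by decide) 3 (by decide), ht 44 (by decide) 3 (by decide),
      ht 44 (by decide) 2 (by decide), ht 45 (by decide) 3 (by decide),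
      ht 47 (by decide) 3 (by decide), ht 47 (by decide) 2 (by decide)]
  · obtain ⟨TT, _, hKK⟩ := hgSearch_sound y hy _ hgOrd2 _ S
      (by simp only [false_or]; decide) (by decide) hS hK
    exact absurd hKK (by simp)

/-- The vertex of `H(r)` with number `a`. -/
def hgPi (r a : ℕ) : Fin 3 × ZMod (2 * r) := (Fin.ofNat 3 a, ((a / 3 : ℕ) : ZMod (2 * r)))

/-- There is a walk of length at most `n`. -/
def hgNear (r n : ℕ) (u v : Fin 3 × ZMod (2 * r)) : Prop :=
  ∃ w : (HGraph r).Walk u v, w.length ≤ n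

theorem hgNear_symm {r n : ℕ} {u v} (h : hgNear r n u v) : hgNear r n v u := by
  obtain ⟨w, hw⟩ := h
  exact ⟨w.reverse, by simpa using hw⟩

theorem hgNear_of_rel {r : ℕ} (x y : Fin 3 × ZMod (2 * r))
    (h : ((x.1 = 0 ∧ y.1 = 0 ∨ x.1 = 2 ∧ y.1 = 2) ∧ y.2 = x.2 + 1) ∨
    ((x.1 = 0 ∧ y.1 = 1 ∨ x.1 = 1 ∧ y.1 = 2) ∧ x.2 = y.2) ∨
    (x.1 = 1 ∧ y.1 = 1 ∧ ∃ i : ZMod (2 * r), x.2 = 2 * i ∧ y.2 = 2 * i + 1)) :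
    hgNear r 1 x y := by
  by_cases hxy : x = y
  · subst hxy
    exact ⟨SimpleGraph.Walk.nil, by simp⟩
  · have : (HGraph r).Adj x y := by
      unfold HGraph
      rw [SimpleGraph.fromRel_adj]
      exact ⟨hxy, Or.inl h⟩
    exact ⟨SimpleGraph.Walk.cons this SimpleGraph.Walk.nil, by simp⟩

theorem hgPi_eq (r n j a : ℕ) (hj : j < 3) (h : a = 3 * n + j) :
    hgPi r a = (⟨j, hj⟩, (n : ZMod (2 * r))) := by
  subst h
  unfold hgPi
  have h1 : (3 * n + j) / 3 = n := by omega
  rw [h1]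
  refine Prod.ext (Fin.ext ?_) rfl
  change (3 * n + j) % 3 = j
  omega

theorem hgNear_row (r a : ℕ) (h : a % 3 ≠ 1) : hgNear r 1 (hgPi r a) (hgPi r (a + 3)) := by
  have : a % 3 = 0 ∨ a % 3 = 2 := by omega
  rcases this with h | h
  · rw [hgPi_eq r (a / 3) 0 a (by omega) (by omega),
      hgPi_eq r (a / 3 + 1) 0 (a + 3) (by omega) (by omega)]
    exact hgNear_of_rel _ _ (Or.inl ⟨Or.inl ⟨rfl, rfl⟩, by push_cast; rfl⟩)
  · rw [hgPi_eq r (a / 3) 2 a (by omega) (by omega),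
      hgPi_eq r (a / 3 + 1) 2 (a + 3) (by omega) (by omega)]
    exact hgNear_of_rel _ _ (Or.inl ⟨Or.inr ⟨rfl, rfl⟩, by push_cast; rfl⟩)

theorem hgNear_col (r a : ℕ) (h : a % 3 ≠ 2) : hgNear r 1 (hgPi r a) (hgPi r (a + 1)) := by
  have : a % 3 = 0 ∨ a % 3 = 1 := by omega
  rcases this with h | h
  · rw [hgPi_eq r (a / 3) 0 a (by omega) (by omega),
      hgPi_eq r (a / 3) 1 (a + 1) (by omega) (by omega)]
    exact hgNear_of_rel _ _ (Or.inr (Or.inl ⟨Or.inl ⟨rfl, rfl⟩, rfl⟩))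
  · rw [hgPi_eq r (a / 3) 1 a (by omega) (by omega),
      hgPi_eq r (a / 3) 2 (a + 1) (by omega) (by omega)]
    exact hgNear_of_rel _ _ (Or.inr (Or.inl ⟨Or.inr ⟨rfl, rfl⟩, rfl⟩))

theorem hgNear_mid (r a : ℕ) (h : a % 6 = 1) : hgNear r 1 (hgPi r a) (hgPi r (a + 3)) := by
  rw [hgPi_eq r (2 * (a / 6)) 1 a (by omega) (by omega),
    hgPi_eq r (2 * (a / 6) + 1) 1 (a + 3) (by omega) (by omega)]
  exact hgNear_of_rel _ _ (Or.inr (Or.inr ⟨rfl, rfl, ((a / 6 : ℕ) : ZMod (2 * r)),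
    by push_cast; rfl, by push_cast; rfl⟩))

theorem hgNear_nb (r m a b : ℕ) (ha : 3 ≤ a) (hb : b ∈ hgNb a) :
    hgNear r 1 (hgPi r (6 * m + a)) (hgPi r (6 * m + b)) := by
  have h : (b = a + 3 ∧ a % 3 ≠ 1) ∨ (a = b + 3 ∧ b % 3 ≠ 1) ∨ (b = a + 1 ∧ a % 3 ≠ 2) ∨
      (a = b + 1 ∧ b % 3 ≠ 2) ∨ (b = a + 3 ∧ a % 6 = 1) ∨ (a = b + 3 ∧ b % 6 = 1) := by
    unfold hgNb at hb
    split_ifs at hb <;> simp only [List.mem_cons, List.not_mem_nil, or_false] at hb <;> omega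
  rcases h with ⟨rfl, h⟩ | ⟨rfl, h⟩ | ⟨rfl, h⟩ | ⟨rfl, h⟩ | ⟨rfl, h⟩ | ⟨rfl, h⟩
  · exact hgNear_row r (6 * m + a) (by omega)
  · exact hgNear_symm (hgNear_row r (6 * m + b) (by omega))
  · exact hgNear_col r (6 * m + a) (by omega)
  · exact hgNear_symm (hgNear_col r (6 * m + b) (by omega))
  · exact hgNear_mid r (6 * m + a) (by omega)
  · exact hgNear_symm (hgNear_mid r (6 * m + b) (by omega))

theorem hgNear_ball (r m n : ℕ) : ∀ a b, 3 * n ≤ a → b ∈ hgBall n a →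
    hgNear r n (hgPi r (6 * m + a)) (hgPi r (6 * m + b)) := by
  induction n with
  | zero =>
    intro a b _ hb
    simp only [hgBall, List.mem_singleton] at hb
    subst hb
    exact ⟨SimpleGraph.Walk.nil, by simp⟩
  | succ n ih =>
    intro a b ha hb
    simp only [hgBall, List.mem_cons, List.mem_flatMap] at hb
    rcases hb with rfl | ⟨d, hd, hb⟩
    · exact ⟨SimpleGraph.Walk.nil, by simp⟩
    · obtain ⟨w1, h1⟩ := hgNear_nb r m a d (by omega) hd
      have hda : a ≤ d + 3 := by
        unfold hgNb at hd
        split_ifs at hd <;> simp only [List.mem_cons, List.not_mem_nil, or_false] at hd <;> omega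
      obtain ⟨w2, h2⟩ := ih d b (by omega) hb
      exact ⟨w1.append w2, by rw [SimpleGraph.Walk.length_append]; omega⟩

theorem hgPi_ne (r a b : ℕ) (hr : 3 ≤ r) (h1 : a < b) (h2 : b < a + 18) :
    hgPi r a ≠ hgPi r b := by
  intro h
  have h3 : a % 3 = b % 3 := congrArg (fun x => (x.1 : ℕ)) h
  have h4 : ((a / 3 : ℕ) : ZMod (2 * r)) = ((b / 3 : ℕ) : ZMod (2 * r)) := congrArg Prod.snd h
  rw [ZMod.natCast_eq_natCast_iff, Nat.modEq_iff_dvd' (by omega)] at h4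
  have := Nat.le_of_dvd (by omega) h4
  omega

theorem hgPi_period (r a : ℕ) : hgPi r (a + 6 * r) = hgPi r a := by
  rw [hgPi_eq r (a / 3) (a % 3) a (Nat.mod_lt _ (by norm_num)) (by omega),
    hgPi_eq r (a / 3 + 2 * r) (a % 3) (a + 6 * r) (Nat.mod_lt _ (by norm_num)) (by omega)]
  refine Prod.ext rfl ?_
  have : ((2 * r : ℕ) : ZMod (2 * r)) = 0 := ZMod.natCast_self _
  change ((a / 3 + 2 * r : ℕ) : ZMod (2 * r)) = _
  rw [Nat.cast_add, this, add_zero]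

theorem hgValid_of_coloring (r : ℕ) (hr : 3 ≤ r) (c : Fin 3 × ZMod (2 * r) → ℕ)
    (hc : IsPackingColoring (HGraph r) 6 (fun i => i) c) (m : ℕ) :
    hgValid (fun p => c (hgPi r (6 * m + p))) := by
  refine ⟨fun p => hc.1 _, ?_⟩
  intro k d o hk ho hkd hod
  dsimp only at hkd hod
  have hlt := hgOffs_lt _ _ _ ho
  obtain ⟨hb, h1, h2, h3⟩ := hgOffs_spec _ hlt.1 _ hlt.2 o ho
  have hn := hgNear_ball r (m + (k / 6 - 3)) d (18 + k % 6) o (by omega) hb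
  have e1 : 6 * (m + (k / 6 - 3)) + (18 + k % 6) = 6 * m + k := by omega
  have e2 : 6 * (m + (k / 6 - 3)) + o = 6 * m + (6 * (k / 6) - 18 + o) := by omega
  rw [e1, e2] at hn
  obtain ⟨w, hw⟩ := hn
  have hd := SimpleGraph.dist_le w
  have hne : hgPi r (6 * m + k) ≠ hgPi r (6 * m + (6 * (k / 6) - 18 + o)) := by
    rcases lt_or_gt_of_ne h1 with h | h
    · exact (hgPi_ne r _ _ hr (by omega) (by omega)).symm
    · exact hgPi_ne r _ _ hr (by omega) (by omega)
  have := hc.2 _ _ hne (hkd.trans hod.symm)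
  dsimp only at this
  omega

theorem hgNoColoring (r : ℕ) (hr : 3 ≤ r) (hodd : Odd r) (c : Fin 3 × ZMod (2 * r) → ℕ)
    (hc : IsPackingColoring (HGraph r) 6 (fun i => i) c) : False := by
  set g : ℕ → Bool := fun m => hgPar (fun i d => decide (c (hgPi r i) = d)) (6 * m) with hg
  have hstep : ∀ m, g (m + 7) = !g (m + 6) := by
    intro m
    have h := hgValid_diff _ (hgValid_of_coloring r hr c hc m)
    have h1 : g (m + 6) = hgPar (fun i d => decide (c (hgPi r (6 * m + i)) = d)) 36 := rfl
    have h2 : g (m + 7) = hgPar (fun i d => decide (c (hgPi r (6 * m + i)) = d)) 42 := rfl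
    unfold hgDiff at h
    rw [← h1, ← h2] at h
    revert h
    cases g (m + 6) <;> cases g (m + 7) <;> simp
  have hall : ∀ n, g (n + 6) = xor (g 6) (decide (n % 2 = 1)) := by
    intro n
    induction n with
    | zero => simp
    | succ n ih =>
      have := hstep n
      rw [show n + 1 + 6 = n + 7 by omega, this, ih]
      rcases Nat.mod_two_eq_zero_or_one n with h | h
      · have h' : (n + 1) % 2 = 1 := by omega
        simp [h, h']
      · have h' : (n + 1) % 2 = 0 := by omega
        simp [h, h']
  have hper : g (r + 6) = g 6 := by
    have hp : ∀ i, hgPi r (6 * (r + 6) + i) = hgPi r (6 * 6 + i) := by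
      intro i
      rw [← hgPi_period r (6 * 6 + i)]
      congr 1
      omega
    have hp0 := hp 0
    simp only [Nat.add_zero] at hp0
    simp only [hg, hgPar, hp, hp0]
  have := hall r
  rw [hper, Nat.odd_iff.1 hodd] at this
  revert this
  cases g 6 <;> simp

/-- For every odd `r ≥ 3`, `H(r)` admits no packing `6`-coloring; equivalently
`χ_ρ(H(r)) ≥ 7`. -/
theorem no_packing_6_coloring_H_graph_odd (r : ℕ) (hr : 3 ≤ r) (hodd : Odd r) :
    (¬ ∃ c : Fin 3 × ZMod (2 * r) → ℕ,
      IsPackingColoring (HGraph r) 6 (fun i => i) c) ∧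
    7 ≤ packingChromaticNumber (HGraph r) (fun i => i) := by
  refine ⟨fun ⟨c, hc⟩ => hgNoColoring r hr hodd c hc, ?_⟩
  unfold packingChromaticNumber
  have hne : {k | ∃ c : Fin 3 × ZMod (2 * r) → ℕ,
      IsPackingColoring (HGraph r) k (fun i => i) c}.Nonempty := by
    have : NeZero (2 * r) := ⟨by omega⟩
    let e := Fintype.equivFin (Fin 3 × ZMod (2 * r))
    refine ⟨Fintype.card (Fin 3 × ZMod (2 * r)), fun v => (e v : ℕ) + 1, ?_, ?_⟩
    · intro v
      have := (e v).isLt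
      dsimp only
      omega
    · intro u v huv h
      exact absurd (e.injective (Fin.ext (by simpa using h))) huv
  refine le_csInf hne ?_
  rintro k ⟨c, hc⟩
  by_contra hk
  exact hgNoColoring r hr hodd c ⟨fun v => ⟨(hc.1 v).1, by have := (hc.1 v).2; omega⟩, hc.2⟩
end
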